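/- (Upper bound of mixing time of LMC, Theorem 4) Let f : ℝ^d → ℝ be three times continuously differentiable with m·I ≼ ∇²f(x) ≼ L·I for all x (0 < m ≤ L), κ = L/m, ∇f(0) = 0, and ‖∇(Δf)(x)‖ ≤ G(1+‖x‖) for all x for some G > 0. Let μ be the probability measure on ℝ^d with density proportional to exp(−f), assumed to have finite second moment, and let C_LMC = (10(L² + G)/m^{3/2}) · √(2d + m(E‖x₀‖² + 1)). For any accuracy ε with 0 < ε < 2 W₂(Law(x₀), μ), there exists a step size h with 0 < h ≤ 1/(4κL) such that the LMC iterates (x̄_k) with step size h started from a square-integrable x₀ satisfy W₂(Law(x̄_k), μ) ≤ ε for some k with k ≤ max{4κ², 2C_LMC/(mε)} · log(2 W₂(Law(x₀), μ)/ε); in other words, the ε-mixing time of LMC in W₂ is at most max{4κ², 2C_LMC/(mε)} · log(2 W₂(Law(x₀), μ)/ε). -/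

import Mathlib

open MeasureTheory ProbabilityTheory Real
open scoped ENNReal NNReal

noncomputable section

/-- `ℝ^d` with the Euclidean structure. -/
abbrev Euc (d : ℕ) := EuclideanSpace ℝ (Fin d)

/-- The standard Gaussian measure `N(0, I_d)` on `ℝ^d`. -/
noncomputable def stdGaussian (d : ℕ) : Measure (Euc d) :=
  (Measure.pi fun _ : Fin d => gaussianReal 0 1).map (EuclideanSpace.equiv (Fin d) ℝ).symm

/-- The centered Gaussian measure on `ℝ^d` with covariance `σ2 • I_d`. -/
noncomputable def isoGaussian (d : ℕ) (σ2 : ℝ) : Measure (Euc d) :=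
  (stdGaussian d).map fun x => Real.sqrt σ2 • x

/-- `B` is a standard `d`-dimensional Brownian motion with respect to the filtration `ℱ`
under the probability measure `P`. -/
structure IsStdBrownian {d : ℕ} {Ω : Type*} {mΩ : MeasurableSpace Ω} (P : Measure Ω)
    (ℱ : Filtration ℝ mΩ) (B : ℝ → Ω → Euc d) : Prop where
  init : ∀ ω, B 0 ω = 0
  cont : ∀ ω, Continuous fun t => B t ω
  adapted : StronglyAdapted ℱ B
  incr_law : ∀ s t : ℝ, 0 ≤ s → s ≤ t →
    P.map (fun ω => B t ω - B s ω) = isoGaussian d (t - s)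
  incr_indep : ∀ s t : ℝ, 0 ≤ s → s ≤ t →
    Indep (MeasurableSpace.comap (fun ω => B t ω - B s ω) inferInstance) (ℱ s) P

/-- `X` is a (pathwise) solution of the overdamped Langevin dynamics
`dX_t = -∇f(X_t) dt + √2 dB_t`: a continuous adapted process satisfying the integral
equation `X_t = X_0 - ∫₀ᵗ ∇f(X_s) ds + √2 B_t` for all `t ≥ 0`. -/
structure IsLangevinSolution {d : ℕ} {Ω : Type*} {mΩ : MeasurableSpace Ω}
    (ℱ : Filtration ℝ mΩ) (f : Euc d → ℝ) (B : ℝ → Ω → Euc d) (X : ℝ → Ω → Euc d) : Prop where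
  cont : ∀ ω, Continuous fun t => X t ω
  adapted : StronglyAdapted ℱ X
  eqn : ∀ ω, ∀ t : ℝ, 0 ≤ t →
    X t ω = X 0 ω - (∫ s in (0:ℝ)..t, gradient f (X s ω)) + Real.sqrt 2 • B t ω

/-- The Hessian bounds `m • I ≼ ∇²f(x) ≼ L • I` for all `x`, expressed through the second
iterated Fréchet derivative: `m ‖v‖² ≤ ⟨v, ∇²f(x) v⟩ ≤ L ‖v‖²`. -/
def HessianBounds {d : ℕ} (m L : ℝ) (f : Euc d → ℝ) : Prop :=
  ∀ x v : Euc d, m * ‖v‖ ^ 2 ≤ iteratedFDeriv ℝ 2 f x ![v, v] ∧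
    iteratedFDeriv ℝ 2 f x ![v, v] ≤ L * ‖v‖ ^ 2


/-- The 2-Wasserstein distance:
`W₂(μ, ν) = inf over couplings γ of (∫ ‖x - y‖² dγ)^{1/2}`, where a coupling of `μ` and `ν`
is a probability measure on the product space whose marginals are `μ` and `ν`. -/
noncomputable def W2 {α : Type*} [MeasurableSpace α] [NormedAddCommGroup α]
    (μ ν : Measure α) : ℝ :=
  Real.sqrt (ENNReal.toReal
    (⨅ γ ∈ {γ : Measure (α × α) |
        IsProbabilityMeasure γ ∧ γ.map Prod.fst = μ ∧ γ.map Prod.snd = ν},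
      ∫⁻ p, (‖p.1 - p.2‖₊ : ℝ≥0∞) ^ 2 ∂γ))

/-- `μ` is the probability measure with density proportional to `exp (-f)` with respect to
Lebesgue measure. -/
def IsGibbs {d : ℕ} (f : Euc d → ℝ) (μ : Measure (Euc d)) : Prop :=
  IsProbabilityMeasure μ ∧ ∃ c : ℝ≥0∞, c ≠ 0 ∧ c ≠ ⊤ ∧
    μ = c • (volume : Measure (Euc d)).withDensity fun x => ENNReal.ofReal (Real.exp (-f x))


/-- The Laplacian of `f : ℝ^d → ℝ`, i.e. the trace of its Hessian. -/
noncomputable def lapl {d : ℕ} (f : Euc d → ℝ) (x : Euc d) : ℝ :=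
  ∑ i : Fin d,
    iteratedFDeriv ℝ 2 f x ![EuclideanSpace.single i (1:ℝ), EuclideanSpace.single i (1:ℝ)]

set_option linter.unusedVariables false

/-! ### Gaussian facts -/

/-- The Mathlib standard Gaussian on `Euc d`. -/
abbrev gam (d : ℕ) : Measure (Euc d) := ProbabilityTheory.stdGaussian (Euc d)

lemma std_eq (d : ℕ) : _root_.stdGaussian d = gam d := by
  rw [gam, ← map_pi_eq_stdGaussian]; rfl

lemma gam_sum (d : ℕ) :
    ((gam d).prod (gam d)).map (fun p => p.1 + p.2) = (gam d).map (fun x => Real.sqrt 2 • x) := by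
  change Measure.conv (gam d) (gam d) = _
  have : IsProbabilityMeasure ((gam d).map (fun x => Real.sqrt 2 • x)) :=
    Measure.isProbabilityMeasure_map (by fun_prop)
  apply Measure.ext_of_charFun
  ext t
  rw [charFun_conv, charFun_map_smul, charFun_stdGaussian, charFun_stdGaussian, ← Complex.exp_add,
    norm_smul]
  congr 1
  have h2 : ((‖Real.sqrt 2‖ * ‖t‖ : ℝ) : ℂ)^2 = 2 * (‖t‖:ℂ)^2 := by
    norm_cast
    rw [mul_pow, Real.norm_eq_abs, sq_abs, Real.sq_sqrt (by norm_num)]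
  rw [h2]; ring

lemma gam_memLp (d : ℕ) (p : ℝ≥0∞) (hp : p ≠ ⊤) : MemLp (fun x : Euc d => x) p (gam d) :=
  IsGaussian.memLp_id (gam d) p hp

lemma gam_integrable (d : ℕ) : Integrable (fun x : Euc d => x) (gam d) :=
  IsGaussian.integrable_id

lemma gam_integral (d : ℕ) : ∫ x, x ∂(gam d) = 0 := integral_id_stdGaussian

lemma gam_int_sq (d : ℕ) : Integrable (fun x : Euc d => ‖x‖^2) (gam d) :=
  (gam_memLp d 2 (by simp)).integrable_norm_pow (by norm_num)

lemma gam_int_four (d : ℕ) : Integrable (fun x : Euc d => ‖x‖^4) (gam d) :=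
  (gam_memLp d 4 (by simp)).integrable_norm_pow (by norm_num)

lemma gam_sq (d : ℕ) : ∫ x, ‖x‖^2 ∂(gam d) = d := by
  have h1 : ∀ i : Fin d, ∫ x, (x i)^2 ∂(gam d) = 1 := by
    intro i
    have h := variance_dual_stdGaussian (E := Euc d) (EuclideanSpace.proj i)
    rw [variance_of_integral_eq_zero (by fun_prop) (integral_strongDual_stdGaussian _)] at h
    rw [show (∫ x, (x i)^2 ∂(gam d)) =
      ∫ x, ((EuclideanSpace.proj i : Euc d →L[ℝ] ℝ) x)^2 ∂(gam d) from rfl]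
    rw [h]
    have : ‖(EuclideanSpace.proj i : Euc d →L[ℝ] ℝ)‖ = 1 := by
      rw [show (EuclideanSpace.proj i : Euc d →L[ℝ] ℝ) = innerSL ℝ (EuclideanSpace.single i (1:ℝ)) by
        ext x; simp [EuclideanSpace.inner_single_left]]
      simp
    rw [this]; simp
  have hi : ∀ i : Fin d, Integrable (fun x : Euc d => (x i)^2) (gam d) := by
    intro i
    refine (gam_int_sq d).mono' (by fun_prop) (Filter.Eventually.of_forall fun x => ?_)
    rw [Real.norm_eq_abs, abs_of_nonneg (sq_nonneg _), ← sq_abs]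
    gcongr
    exact PiLp.norm_apply_le x i
  simp_rw [EuclideanSpace.real_norm_sq_eq]
  rw [integral_finsetSum _ (fun i _ => hi i)]
  simp [h1]

/-- The Gaussian density. -/
def gpdf (d : ℕ) (x : Euc d) : ℝ := ((2 * π) ^ ((d:ℝ)/2))⁻¹ * Real.exp (-(‖x‖^2/2))

lemma gpdf_pos (d : ℕ) (x : Euc d) : 0 < gpdf d x := by
  unfold gpdf; positivity

lemma gpdf_cont (d : ℕ) : Continuous (gpdf d) := by
  unfold gpdf; fun_prop

lemma gam_density (d : ℕ) :
    gam d = (volume : Measure (Euc d)).withDensity (fun x => ENNReal.ofReal (gpdf d x)) := by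
  have hIntg : Integrable (gpdf d) := by
    have := (GaussianFourier.integrable_cexp_neg_mul_sq_norm_add (V := Euc d) (b := 1/2)
      (by norm_num) 0 0).re
    refine (this.const_mul ((2 * π) ^ ((d:ℝ)/2))⁻¹).congr (Filter.Eventually.of_forall fun x => ?_)
    simp only [gpdf]
    congr 1
    rw [← Complex.ofReal_re (Real.exp _)]
    simp only [RCLike.re_eq_complex_re]
    congr 1
    push_cast
    congr 1
    simp; ring
  have hfin : IsFiniteMeasure ((volume : Measure (Euc d)).withDensity
      (fun x => ENNReal.ofReal (gpdf d x))) := by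
    exact isFiniteMeasure_withDensity_ofReal hIntg.2
  apply Measure.ext_of_charFun
  ext t
  rw [charFun_stdGaussian, charFun_apply]
  rw [integral_withDensity_eq_integral_toReal_smul₀ (by
    exact ((gpdf_cont d).measurable.ennreal_ofReal).aemeasurable) (by simp)]
  have h := GaussianFourier.integral_cexp_neg_mul_sq_norm_add (V := Euc d) (b := 1/2)
      (by norm_num) Complex.I t
  have : ∀ x : Euc d, (ENNReal.ofReal (gpdf d x)).toReal • Complex.exp (((inner ℝ x t : ℝ) : ℂ) * Complex.I)
     = (((2 * π) ^ ((d:ℝ)/2) : ℝ) : ℂ)⁻¹ * Complex.exp (-(1/2) * (‖x‖:ℂ)^2 + Complex.I * (inner ℝ t x : ℝ)) := by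
    intro x
    rw [ENNReal.toReal_ofReal (gpdf_pos d x).le, Complex.exp_add, gpdf, real_inner_comm]
    rw [Complex.real_smul]; push_cast
    rw [mul_assoc]; congr 2
    · congr 1; ring
    · congr 1; ring
  simp_rw [this]
  rw [integral_const_mul, h]
  have h3 : (π / (1/2) : ℂ) ^ ((Module.finrank ℝ (Euc d) : ℂ) / 2) = (((2 * π) ^ ((d:ℝ)/2) : ℝ) : ℂ) := by
    rw [Complex.ofReal_cpow (by positivity)]
    simp; congr 1; ring
  rw [h3, ← mul_assoc, inv_mul_cancel₀, one_mul]
  · congr 1; simp; ring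
  · norm_cast; positivity


/-! ### Stein identity -/

lemma gpdf_hasFDerivAt (d : ℕ) (x v : Euc d) :
    DifferentiableAt ℝ (gpdf d) x ∧ fderiv ℝ (gpdf d) x v = -(inner ℝ x v * gpdf d x) := by
  have h1 : HasFDerivAt (fun y : Euc d => ‖y‖^2) (2 • innerSL ℝ x) x :=
    (hasStrictFDerivAt_norm_sq x).hasFDerivAt
  have h2 := (((h1.const_mul (1/2)).neg).exp).const_mul (((2 * π) ^ ((d:ℝ)/2))⁻¹)
  have h3 : (fun y : Euc d => ((2 * π) ^ ((d:ℝ)/2))⁻¹ * Real.exp (-(1/2 * ‖y‖^2))) = gpdf d := by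
    ext y; simp only [gpdf]; congr 2; ring
  have h2' : HasFDerivAt (gpdf d) _ x := h3 ▸ h2
  refine ⟨h2'.differentiableAt, ?_⟩
  rw [h2'.fderiv]
  simp [gpdf]
  ring_nf

lemma gam_integral_eq (d : ℕ) (F : Euc d → ℝ) :
    ∫ x, F x ∂(gam d) = ∫ x, F x * gpdf d x := by
  rw [gam_density, integral_withDensity_eq_integral_toReal_smul₀
    ((gpdf_cont d).measurable.ennreal_ofReal).aemeasurable (by simp)]
  refine integral_congr_ae (Filter.Eventually.of_forall fun x => ?_)
  simp [ENNReal.toReal_ofReal (gpdf_pos d x).le, mul_comm]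

lemma gam_integrable_iff (d : ℕ) (F : Euc d → ℝ) :
    Integrable F (gam d) ↔ Integrable (fun x => F x * gpdf d x) := by
  rw [gam_density, integrable_withDensity_iff (gpdf_cont d).measurable.ennreal_ofReal (by simp)]
  simp [ENNReal.toReal_ofReal (gpdf_pos d _).le]

lemma stein (d : ℕ) (F : Euc d → ℝ) (hF : ContDiff ℝ 1 F) (v : Euc d) (A B : ℝ)
    (hA : ∀ x, |F x| ≤ A * (1 + ‖x‖)) (hB : ∀ x, |fderiv ℝ F x v| ≤ B) :
    ∫ x, F x * inner ℝ x v ∂(gam d) = ∫ x, fderiv ℝ F x v ∂(gam d) := by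
  have hA0 : 0 ≤ A := by
    have := (abs_nonneg _).trans (hA 0)
    simpa using this
  have i1 : Integrable (fun x => fderiv ℝ F x v) (gam d) := by
    refine (integrable_const B).mono' ?_ (Filter.Eventually.of_forall hB)
    exact ((hF.continuous_fderiv (by norm_num)).clm_apply continuous_const).aestronglyMeasurable
  have hFc := hF.continuous
  have i2 : Integrable (fun x => F x) (gam d) := by
    refine (((integrable_const (1:ℝ)).add (gam_integrable d).norm).const_mul A).mono' ?_
      (Filter.Eventually.of_forall hA)
    exact hFc.aestronglyMeasurable
  have i3 : Integrable (fun x => F x * inner ℝ x v) (gam d) := by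
    refine ((((gam_integrable d).norm).add (gam_int_sq d)).const_mul (A * ‖v‖)).mono' ?_
      (Filter.Eventually.of_forall fun x => ?_)
    · exact (hFc.mul (by fun_prop)).aestronglyMeasurable
    · rw [norm_mul]
      have h1 := hA x
      have h2 := norm_inner_le_norm (𝕜 := ℝ) x v
      calc ‖F x‖ * ‖inner ℝ x v‖ ≤ (A * (1 + ‖x‖)) * (‖x‖ * ‖v‖) := by
            gcongr; exact h1
        _ = A * ‖v‖ * (‖x‖ + ‖x‖^2) := by ring
  have key := integral_mul_fderiv_eq_neg_fderiv_mul_of_integrable (μ := (volume : Measure (Euc d)))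
    (f := F) (g := gpdf d) (v := v) ((gam_integrable_iff d _).1 i1) (by
      have := ((gam_integrable_iff d _).1 i3).neg
      refine this.congr (Filter.Eventually.of_forall fun x => ?_)
      simp only [Pi.neg_apply]
      rw [(gpdf_hasFDerivAt d x v).2]; ring) ((gam_integrable_iff d _).1 i2)
    (fun x _ => (hF.differentiable (by norm_num)) x) (fun x _ => (gpdf_hasFDerivAt d x v).1)
  rw [gam_integral_eq, gam_integral_eq]
  have : ∫ x, F x * inner ℝ x v * gpdf d x = - ∫ x, F x * fderiv ℝ (gpdf d) x v := by
    rw [← integral_neg]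
    refine integral_congr_ae (Filter.Eventually.of_forall fun x => ?_)
    simp only
    rw [(gpdf_hasFDerivAt d x v).2]; ring
  rw [this, key, neg_neg]


/-! ### Calculus facts about the potential -/

/-- The standing hypotheses on the potential. -/
structure Pot {d : ℕ} (f : Euc d → ℝ) (m L G : ℝ) : Prop where
  hm : 0 < m
  hmL : m ≤ L
  hf : ContDiff ℝ 3 f
  hHess : HessianBounds m L f
  hgrad0 : gradient f 0 = 0
  hG : 0 < G
  hlapl : ∀ x : Euc d, ‖gradient (lapl f) x‖ ≤ G * (1 + ‖x‖)

/-- The inverse Riesz map as a continuous linear map. -/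
def dualInv (d : ℕ) : StrongDual ℝ (Euc d) →L[ℝ] Euc d where
  toFun := (InnerProductSpace.toDual ℝ (Euc d)).symm
  map_add' := map_add _
  map_smul' := by intro c x; simp
  cont := (InnerProductSpace.toDual ℝ (Euc d)).symm.continuous

lemma dualInv_apply {d : ℕ} (l : StrongDual ℝ (Euc d)) :
    dualInv d l = (InnerProductSpace.toDual ℝ (Euc d)).symm l := rfl

/-- The Hessian as an operator. -/
def Hs {d : ℕ} (f : Euc d → ℝ) (x : Euc d) : Euc d →L[ℝ] Euc d :=
  dualInv d ∘L (fderiv ℝ (fderiv ℝ f) x)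

lemma sym_norm_le {d : ℕ} (T : Euc d →L[ℝ] Euc d) (c : ℝ) (hc : 0 ≤ c)
    (hs : ∀ v w, inner ℝ (T v) w = inner ℝ (T w) v)
    (hb : ∀ v, |inner ℝ (T v) v| ≤ c * ‖v‖^2) : ‖T‖ ≤ c := by
  refine T.opNorm_le_bound hc fun v => ?_
  by_cases hv : ‖T v‖ = 0
  · rw [hv]; positivity
  have hv' : 0 < ‖T v‖ := lt_of_le_of_ne (norm_nonneg _) (Ne.symm hv)
  have hvn : 0 < ‖v‖ := by
    rw [norm_pos_iff]; rintro rfl; simp at hv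
  -- w scaled so that ‖w‖ = ‖v‖
  set w : Euc d := (‖v‖ / ‖T v‖) • T v with hw
  have hwn : ‖w‖ = ‖v‖ := by
    rw [hw, norm_smul, Real.norm_eq_abs, abs_of_nonneg (by positivity)]
    field_simp
  have e1 : inner ℝ (T v) w = ‖v‖ * ‖T v‖ := by
    rw [hw, inner_smul_right, real_inner_self_eq_norm_sq]; field_simp
  have e2 : 4 * inner ℝ (T v) w = inner ℝ (T (v + w)) (v + w) - inner ℝ (T (v - w)) (v - w) := by
    simp only [map_add, map_sub, inner_add_left, inner_add_right, inner_sub_left, inner_sub_right]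
    rw [hs w v]; ring
  have b1 := (abs_le.1 (hb (v + w))).2
  have b2 := (abs_le.1 (hb (v - w))).1
  have par := parallelogram_law_with_norm ℝ v w
  have : 4 * (‖v‖ * ‖T v‖) ≤ 4 * (c * ‖v‖ * ‖v‖) := by
    rw [← e1, e2]
    rw [hwn] at par
    nlinarith
  have h3 : ‖v‖ * ‖T v‖ ≤ ‖v‖ * (c * ‖v‖) := by nlinarith
  exact le_of_mul_le_mul_left h3 hvn

namespace Pot
variable {d : ℕ} {f : Euc d → ℝ} {m L G : ℝ}

lemma hL (H : Pot f m L G) : 0 < L := H.hm.trans_le H.hmL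

lemma diff (H : Pot f m L G) : Differentiable ℝ f := H.hf.differentiable (by norm_num)

lemma fderiv_cd (H : Pot f m L G) : ContDiff ℝ 2 (fderiv ℝ f) :=
  H.hf.fderiv_right (by norm_num)

lemma fderiv2_cd (H : Pot f m L G) : ContDiff ℝ 1 (fderiv ℝ (fderiv ℝ f)) :=
  H.fderiv_cd.fderiv_right (by norm_num)

lemma inner_grad (H : Pot f m L G) (x v : Euc d) : inner ℝ (gradient f x) v = fderiv ℝ f x v := by
  simp [gradient]

lemma grad_hasFDerivAt (H : Pot f m L G) (x : Euc d) :
    HasFDerivAt (gradient f) (Hs f x) x := by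
  have h1 : HasFDerivAt (fderiv ℝ f) (fderiv ℝ (fderiv ℝ f) x) x :=
    (H.fderiv_cd.differentiable (by norm_num) x).hasFDerivAt
  exact (dualInv d).hasFDerivAt.comp x h1

lemma grad_cont (H : Pot f m L G) : Continuous (gradient f) :=
  continuous_iff_continuousAt.2 fun x => (H.grad_hasFDerivAt x).continuousAt

lemma inner_Hs (H : Pot f m L G) (x v w : Euc d) :
    inner ℝ (Hs f x v) w = fderiv ℝ (fderiv ℝ f) x v w := by
  simp [Hs, dualInv_apply]

lemma Hs_symm (H : Pot f m L G) (x v w : Euc d) :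
    inner ℝ (Hs f x v) w = inner ℝ (Hs f x w) v := by
  rw [H.inner_Hs, H.inner_Hs]
  have : IsSymmSndFDerivAt ℝ f x := H.hf.contDiffAt.isSymmSndFDerivAt (by simp; norm_num)
  exact this v w

lemma Hs_bounds (H : Pot f m L G) (x v : Euc d) :
    m * ‖v‖^2 ≤ inner ℝ (Hs f x v) v ∧ inner ℝ (Hs f x v) v ≤ L * ‖v‖^2 := by
  have := H.hHess x v
  rw [iteratedFDeriv_two_apply] at this
  rw [H.inner_Hs]
  simpa using this

lemma Hs_norm (H : Pot f m L G) (x : Euc d) : ‖Hs f x‖ ≤ L := by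
  refine sym_norm_le _ _ H.hL.le (H.Hs_symm x) fun v => ?_
  have := H.Hs_bounds x v
  rw [abs_le]
  have h1 : 0 ≤ m * ‖v‖^2 := mul_nonneg H.hm.le (sq_nonneg _)
  have h2 : 0 ≤ L * ‖v‖^2 := mul_nonneg H.hL.le (sq_nonneg _)
  constructor <;> linarith [this.1, this.2]

lemma grad_lip (H : Pot f m L G) (x y : Euc d) :
    ‖gradient f x - gradient f y‖ ≤ L * ‖x - y‖ :=
  convex_univ.norm_image_sub_le_of_norm_hasFDerivWithin_le
    (fun z _ => (H.grad_hasFDerivAt z).hasFDerivWithinAt) (fun z _ => H.Hs_norm z)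
    (Set.mem_univ y) (Set.mem_univ x)

lemma grad_le (H : Pot f m L G) (x : Euc d) : ‖gradient f x‖ ≤ L * ‖x‖ := by
  have := H.grad_lip x 0
  simpa [H.hgrad0] using this

lemma contr (H : Pot f m L G) {h : ℝ} (h0 : 0 ≤ h) (hh : h * L ≤ 1) (x y : Euc d) :
    ‖(x - h • gradient f x) - (y - h • gradient f y)‖ ≤ (1 - m * h) * ‖x - y‖ := by
  refine convex_univ.norm_image_sub_le_of_norm_hasFDerivWithin_le
    (f := fun z => z - h • gradient f z) (f' := fun z => ContinuousLinearMap.id ℝ (Euc d) - h • Hs f z)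
    (fun z _ => ((hasFDerivAt_id z).sub ((H.grad_hasFDerivAt z).const_smul h)).hasFDerivWithinAt)
    (fun z _ => ?_) (Set.mem_univ y) (Set.mem_univ x)
  have hmh : m * h ≤ 1 := by nlinarith [H.hmL]
  refine sym_norm_le _ _ (by linarith) ?_ fun v => ?_
  · intro v w
    simp only [sub_apply, smul_apply, inner_sub_left,
      real_inner_smul_left, H.Hs_symm z v w, ContinuousLinearMap.id_apply]
    rw [real_inner_comm]
  · have := H.Hs_bounds z v
    simp only [sub_apply, smul_apply, inner_sub_left,
      real_inner_smul_left, ContinuousLinearMap.id_apply, real_inner_self_eq_norm_sq]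
    have hv := sq_nonneg ‖v‖
    have h1 : h * inner ℝ (Hs f z v) v ≤ h * (L * ‖v‖^2) := mul_le_mul_of_nonneg_left this.2 h0
    have h2 : h * (m * ‖v‖^2) ≤ h * inner ℝ (Hs f z v) v := mul_le_mul_of_nonneg_left this.1 h0
    rw [abs_le]
    constructor <;> nlinarith

lemma contr0 (H : Pot f m L G) {h : ℝ} (h0 : 0 ≤ h) (hh : h * L ≤ 1) (x : Euc d) :
    ‖x - h • gradient f x‖ ≤ (1 - m * h) * ‖x‖ := by
  have := H.contr h0 hh x 0
  simpa [H.hgrad0] using this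

lemma taylor (H : Pot f m L G) (x v : Euc d) :
    |f (x + v) - f x - inner ℝ (gradient f x) v| ≤ L * ‖v‖^2 := by
  have h := (convex_segment x (x+v)).norm_image_sub_le_of_norm_hasFDerivWithin_le
    (f := fun z => f z - fderiv ℝ f x z) (f' := fun z => fderiv ℝ f z - fderiv ℝ f x)
    (C := L * ‖v‖)
    (fun z _ => (((H.diff z).hasFDerivAt).sub (fderiv ℝ f x).hasFDerivAt).hasFDerivWithinAt)
    (fun z hz => ?_) (left_mem_segment ℝ x (x+v)) (right_mem_segment ℝ x (x+v))
  · rw [H.inner_grad]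
    simp only [map_add, Real.norm_eq_abs, add_sub_cancel_left] at h
    calc _ = |f (x + v) - ((fderiv ℝ f x) x + (fderiv ℝ f x) v) - (f x - (fderiv ℝ f x) x)| := by
          congr 1; ring
      _ ≤ _ := h
      _ = _ := by ring
  · have e : ‖fderiv ℝ f z - fderiv ℝ f x‖ = ‖gradient f z - gradient f x‖ := by
      simp only [gradient]
      rw [← map_sub, LinearIsometryEquiv.norm_map]
    rw [e]
    refine (H.grad_lip z x).trans ?_
    gcongr
    · exact H.hL.le
    have := norm_sub_le_of_mem_segment hz
    simpa using this

lemma lapl_eq (H : Pot f m L G) (x : Euc d) : lapl f x = ∑ i : Fin d,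
    fderiv ℝ (fderiv ℝ f) x (EuclideanSpace.single i (1:ℝ)) (EuclideanSpace.single i (1:ℝ)) := by
  simp [lapl, iteratedFDeriv_two_apply]

lemma lapl_cd (H : Pot f m L G) : ContDiff ℝ 1 (lapl f) := by
  have : lapl f = fun x => ∑ i : Fin d,
    fderiv ℝ (fderiv ℝ f) x (EuclideanSpace.single i (1:ℝ)) (EuclideanSpace.single i (1:ℝ)) :=
    funext H.lapl_eq
  rw [this]
  exact ContDiff.sum fun i _ => ((H.fderiv2_cd.clm_apply contDiff_const).clm_apply contDiff_const)

lemma lapl_lip (H : Pot f m L G) (x v : Euc d) :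
    |lapl f (x + v) - lapl f x| ≤ G * (1 + ‖x‖ + ‖v‖) * ‖v‖ := by
  have h := (convex_segment x (x+v)).norm_image_sub_le_of_norm_hasFDerivWithin_le
    (f := lapl f) (f' := fun z => fderiv ℝ (lapl f) z)
    (C := G * (1 + ‖x‖ + ‖v‖))
    (fun z _ => ((H.lapl_cd.differentiable (by norm_num) z).hasFDerivAt).hasFDerivWithinAt)
    (fun z hz => ?_) (left_mem_segment ℝ x (x+v)) (right_mem_segment ℝ x (x+v))
  · simpa using h
  · have e : ‖fderiv ℝ (lapl f) z‖ = ‖gradient (lapl f) z‖ := by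
      simp only [gradient]
      rw [LinearIsometryEquiv.norm_map]
    rw [e]
    refine (H.hlapl z).trans ?_
    have h1 := norm_sub_le_of_mem_segment hz
    have h2 : ‖z‖ ≤ ‖x‖ + ‖v‖ := by
      have : ‖z‖ ≤ ‖x‖ + ‖z - x‖ := by simpa using norm_add_le x (z - x)
      have h3 : ‖z - x‖ ≤ ‖v‖ := by simpa using h1
      linarith
    exact mul_le_mul_of_nonneg_left (by linarith) H.hG.le

end Pot

/-! ### The heat-flow estimate -/

lemma gam_norm_le (d : ℕ) : ∫ x, ‖x‖ ∂(gam d) ≤ Real.sqrt d := by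
  have h := variance_nonneg (fun x : Euc d => ‖x‖) (gam d)
  rw [variance_eq_sub (gam_memLp d 2 (by simp)).norm] at h
  have e : (∫ x, ((fun x : Euc d => ‖x‖) ^ 2) x ∂(gam d)) = d := gam_sq d
  rw [e] at h
  exact Real.le_sqrt_of_sq_le (by linarith)

namespace Pot
variable {d : ℕ} {f : Euc d → ℝ} {m L G : ℝ}

lemma f_le (H : Pot f m L G) (x : Euc d) : |f x| ≤ |f 0| + L * ‖x‖^2 := by
  have h := H.taylor 0 x
  simp only [zero_add, H.hgrad0, inner_zero_left, sub_zero] at h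
  have := abs_add_le (f 0) (f x - f 0)
  simp only [add_sub_cancel] at this
  linarith

lemma f_cont (H : Pot f m L G) : Continuous f := H.diff.continuous

lemma norm_add_sq_le (z y : Euc d) : ‖z + y‖^2 ≤ 2*‖z‖^2 + 2*‖y‖^2 := by
  have := norm_add_le z y
  have h0 := norm_nonneg (z+y)
  nlinarith [sq_nonneg (‖z‖ - ‖y‖)]

lemma f_int (H : Pot f m L G) (z : Euc d) (s : ℝ) :
    Integrable (fun ξ => f (z + s • ξ)) (gam d) := by
  refine (((integrable_const (|f 0| + L * (2*‖z‖^2))).add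
    ((gam_int_sq d).const_mul (2 * L * s^2)))).mono' ?_ (Filter.Eventually.of_forall fun ξ => ?_)
  · exact (H.f_cont.comp (by fun_prop)).aestronglyMeasurable
  · have h1 := H.f_le (z + s • ξ)
    have h2 := norm_add_sq_le z (s • ξ)
    rw [norm_smul, mul_pow, Real.norm_eq_abs, sq_abs] at h2
    have := mul_le_mul_of_nonneg_left h2 H.hL.le
    simp only [Pi.add_apply, Real.norm_eq_abs]
    linarith

lemma grad_int (H : Pot f m L G) (z : Euc d) (s : ℝ) :
    Integrable (fun ξ => gradient f (z + s • ξ)) (gam d) := by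
  refine ((integrable_const (L * ‖z‖)).add
    ((gam_integrable d).norm.const_mul (L * |s|))).mono' ?_ (Filter.Eventually.of_forall fun ξ => ?_)
  · exact (H.grad_cont.comp (by fun_prop)).aestronglyMeasurable
  · have h1 := H.grad_le (z + s • ξ)
    have h2 := norm_add_le z (s • ξ)
    rw [norm_smul, Real.norm_eq_abs] at h2
    have := mul_le_mul_of_nonneg_left h2 H.hL.le
    simp only [Pi.add_apply]
    linarith

lemma lapl_bdd (H : Pot f m L G) (x : Euc d) : |lapl f x| ≤ d * L := by
  rw [H.lapl_eq]
  refine (Finset.abs_sum_le_sum_abs _ _).trans ?_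
  have : ∀ i ∈ (Finset.univ : Finset (Fin d)), |fderiv ℝ (fderiv ℝ f) x
      (EuclideanSpace.single i (1:ℝ)) (EuclideanSpace.single i (1:ℝ))| ≤ L := by
    intro i _
    have h := H.Hs_bounds x (EuclideanSpace.single i (1:ℝ))
    rw [H.inner_Hs] at h
    simp only [PiLp.norm_single, norm_one, one_pow, mul_one] at h
    rw [abs_le]
    constructor <;> linarith [h.1, h.2, H.hm, H.hL]
  refine (Finset.sum_le_sum this).trans ?_
  simp

lemma lapl_int (H : Pot f m L G) (z : Euc d) (s : ℝ) :
    Integrable (fun ξ => lapl f (z + s • ξ)) (gam d) := by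
  refine (integrable_const (d * L)).mono' ?_ (Filter.Eventually.of_forall fun ξ => H.lapl_bdd _)
  exact (H.lapl_cd.continuous.comp (by fun_prop)).aestronglyMeasurable

lemma stein_f (H : Pot f m L G) (z : Euc d) (s : ℝ) :
    ∫ ξ, inner ℝ (gradient f (z + s • ξ)) ξ ∂(gam d) = s * ∫ ξ, lapl f (z + s • ξ) ∂(gam d) := by
  set e : Fin d → Euc d := fun i => EuclideanSpace.single i (1:ℝ) with he
  have haff : ∀ ξ : Euc d, HasFDerivAt (fun ξ : Euc d => z + s • ξ)
      (s • ContinuousLinearMap.id ℝ (Euc d)) ξ := fun ξ =>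
    ((hasFDerivAt_id ξ).const_smul s).const_add z
  have hder : ∀ i ξ, HasFDerivAt (fun ξ => fderiv ℝ f (z + s • ξ) (e i))
      ((fderiv ℝ (fderiv ℝ f) (z + s • ξ) ∘L (s • ContinuousLinearMap.id ℝ (Euc d))).flip (e i)) ξ := by
    intro i ξ
    have h1 : HasFDerivAt (fderiv ℝ f) (fderiv ℝ (fderiv ℝ f) (z + s • ξ)) (z + s • ξ) :=
      (H.fderiv_cd.differentiable (by norm_num) _).hasFDerivAt
    have h2 := h1.comp ξ (haff ξ)
    have h3 := h2.clm_apply (hasFDerivAt_const (e i) ξ)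
    simpa using h3
  have hbd : ∀ i ξ, |fderiv ℝ (fderiv ℝ f) (z + s • ξ) (e i) (e i)| ≤ L := by
    intro i ξ
    have h := H.Hs_bounds (z + s • ξ) (e i)
    rw [H.inner_Hs] at h
    simp only [he, PiLp.norm_single, norm_one, one_pow, mul_one] at h
    rw [abs_le]
    constructor <;> linarith [h.1, h.2, H.hm, H.hL]
  have hF : ∀ i ξ, |fderiv ℝ f (z + s • ξ) (e i)| ≤ L * (‖z‖ + |s|) * (1 + ‖ξ‖) := by
    intro i ξ
    rw [← H.inner_grad]
    refine (abs_real_inner_le_norm _ _).trans ?_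
    simp only [he, PiLp.norm_single, norm_one, mul_one]
    refine (H.grad_le _).trans ?_
    rw [mul_assoc]
    refine mul_le_mul_of_nonneg_left ?_ H.hL.le
    refine (norm_add_le _ _).trans ?_
    rw [norm_smul, Real.norm_eq_abs]
    nlinarith [norm_nonneg z, norm_nonneg ξ, abs_nonneg s, mul_nonneg (norm_nonneg z) (norm_nonneg ξ)]
  have hcd : ∀ i, ContDiff ℝ 1 (fun ξ => fderiv ℝ f (z + s • ξ) (e i)) := by
    intro i
    have : ContDiff ℝ 1 (fderiv ℝ f) := H.fderiv_cd.of_le (by norm_num)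
    exact (this.comp (by fun_prop)).clm_apply contDiff_const
  have hst : ∀ i, ∫ ξ, fderiv ℝ f (z + s • ξ) (e i) * inner ℝ ξ (e i) ∂(gam d)
      = ∫ ξ, s * fderiv ℝ (fderiv ℝ f) (z + s • ξ) (e i) (e i) ∂(gam d) := by
    intro i
    have hfd : ∀ ξ, fderiv ℝ (fun ξ => fderiv ℝ f (z + s • ξ) (e i)) ξ (e i)
        = s * fderiv ℝ (fderiv ℝ f) (z + s • ξ) (e i) (e i) := by
      intro ξ; rw [(hder i ξ).fderiv]; simp
    rw [stein d _ (hcd i) (e i) _ (|s| * L) (hF i) (fun ξ => by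
      rw [hfd, abs_mul]; exact mul_le_mul_of_nonneg_left (hbd i ξ) (abs_nonneg s))]
    simp_rw [hfd]
  have hexp : ∀ ξ : Euc d, inner ℝ (gradient f (z + s • ξ)) ξ
      = ∑ i, fderiv ℝ f (z + s • ξ) (e i) * inner ℝ ξ (e i) := by
    intro ξ
    have := (EuclideanSpace.basisFun (Fin d) ℝ).sum_inner_mul_inner (gradient f (z + s • ξ)) ξ
    rw [← this]
    refine Finset.sum_congr rfl fun i _ => ?_
    rw [← H.inner_grad, real_inner_comm ξ]
    simp [he]
  simp_rw [hexp, H.lapl_eq]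
  rw [integral_finsetSum, ← integral_const_mul]
  · simp_rw [hst, Finset.mul_sum]
    rw [integral_finsetSum]
    intro i _
    refine (integrable_const (|s| * L)).mono' ?_ (Filter.Eventually.of_forall fun ξ => ?_)
    · have := H.fderiv2_cd.continuous
      have h2 : Continuous fun ξ : Euc d => fderiv ℝ (fderiv ℝ f) (z + s • ξ) :=
        this.comp (by fun_prop)
      exact (continuous_const.mul ((h2.clm_apply continuous_const).clm_apply
        continuous_const)).aestronglyMeasurable
    · rw [norm_mul]; exact mul_le_mul_of_nonneg_left (hbd i ξ) (abs_nonneg s)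
  · intro i _
    refine ((((gam_integrable d).norm).add (gam_int_sq d)).const_mul (L * (‖z‖ + |s|))).mono' ?_
      (Filter.Eventually.of_forall fun ξ => ?_)
    · exact ((hcd i).continuous.mul (by fun_prop)).aestronglyMeasurable
    · rw [norm_mul]
      have h1 := hF i ξ
      have h2 := norm_inner_le_norm (𝕜 := ℝ) ξ (e i)
      simp only [he, PiLp.norm_single, norm_one, mul_one] at h2
      have hL := H.hL.le
      calc ‖_‖ * ‖inner ℝ ξ (e i)‖ ≤ (L * (‖z‖ + |s|) * (1 + ‖ξ‖)) * ‖ξ‖ :=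
            mul_le_mul h1 h2 (norm_nonneg _) (by positivity)
        _ = _ := by simp; ring

lemma psi_deriv (H : Pot f m L G) (z : Euc d) (s : ℝ) :
    HasDerivAt (fun s => ∫ ξ, f (z + s • ξ) ∂(gam d))
      (s * ∫ ξ, lapl f (z + s • ξ) ∂(gam d)) s := by
  rw [← H.stein_f]
  have hL := H.hL.le
  refine (hasDerivAt_integral_of_dominated_loc_of_deriv_le (μ := gam d)
    (F := fun s ξ => f (z + s • ξ)) (F' := fun s ξ => inner ℝ (gradient f (z + s • ξ)) ξ)
    (bound := fun ξ => L * ‖z‖ * ‖ξ‖ + L * (|s| + 1) * ‖ξ‖^2) (s := Metric.ball s 1)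
    (Metric.ball_mem_nhds s one_pos) ?_ (H.f_int z s) ?_ ?_ ?_ ?_).2
  · exact Filter.Eventually.of_forall fun r => (H.f_int z r).aestronglyMeasurable
  · have : Continuous fun ξ => gradient f (z + s • ξ) := H.grad_cont.comp (by fun_prop)
    exact (this.inner continuous_id).aestronglyMeasurable
  · refine Filter.Eventually.of_forall fun ξ r hr => ?_
    have hr' : |r| ≤ |s| + 1 := by
      rw [Metric.mem_ball, Real.dist_eq] at hr
      have := abs_sub_abs_le_abs_sub r s
      linarith
    refine (norm_inner_le_norm _ _).trans ?_
    have h1 : ‖gradient f (z + r • ξ)‖ ≤ L * (‖z‖ + (|s|+1) * ‖ξ‖) := by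
      refine (H.grad_le _).trans (mul_le_mul_of_nonneg_left ?_ hL)
      refine (norm_add_le _ _).trans ?_
      rw [norm_smul, Real.norm_eq_abs]
      gcongr
    calc _ ≤ L * (‖z‖ + (|s|+1) * ‖ξ‖) * ‖ξ‖ := by gcongr
      _ = _ := by ring
  · exact ((gam_integrable d).norm.const_mul _).add ((gam_int_sq d).const_mul _)
  · refine Filter.Eventually.of_forall fun ξ r _ => ?_
    have h1 : HasFDerivAt f (fderiv ℝ f (z + r • ξ)) (z + r • ξ) := (H.diff _).hasFDerivAt
    have h2 : HasDerivAt (fun r : ℝ => z + r • ξ) ξ r := by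
      simpa using ((hasDerivAt_id r).smul_const ξ).const_add z
    have := h1.comp_hasDerivAt r h2
    rw [H.inner_grad]
    exact this

lemma psi_diff (H : Pot f m L G) (z v : Euc d) {s : ℝ} (hs : 0 ≤ s) :
    |(∫ ξ, f (z + v + s • ξ) ∂(gam d)) - (∫ ξ, f (z + s • ξ) ∂(gam d)) - (f (z + v) - f z)| ≤
      G * ‖v‖ * (1 + ‖z‖ + ‖v‖ + s * Real.sqrt d) * (s^2/2) := by
  set K := G * ‖v‖ * (1 + ‖z‖ + ‖v‖ + s * Real.sqrt d) with hK
  have hG := H.hG.le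
  have hd : ∀ r : ℝ, HasDerivAt (fun s => (∫ ξ, f (z + v + s • ξ) ∂(gam d)) -
      (∫ ξ, f (z + s • ξ) ∂(gam d)) - (f (z + v) - f z))
      (r * ∫ ξ, lapl f (z + v + r • ξ) ∂(gam d) - r * ∫ ξ, lapl f (z + r • ξ) ∂(gam d)) r :=
    fun r => ((H.psi_deriv (z+v) r).sub (H.psi_deriv z r)).sub_const _
  have hB : ∀ r : ℝ, HasDerivAt (fun r => K * (r^2/2)) (K * r) r := by
    intro r
    have := (((hasDerivAt_pow 2 r).div_const 2).const_mul K)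
    simpa using this
  have := image_norm_le_of_norm_deriv_right_le_deriv_boundary (a := 0) (b := s)
    (fun r _ => (hd r).continuousAt.continuousWithinAt)
    (fun r _ => (hd r).hasDerivWithinAt) (B := fun r => K * (r^2/2)) (B' := fun r => K * r)
    (by simp) hB (fun r hr => ?_) (Set.right_mem_Icc.2 hs)
  · exact this
  · have hr0 : 0 ≤ r := hr.1
    rw [← mul_sub, ← integral_sub (H.lapl_int _ _) (H.lapl_int _ _), norm_mul, Real.norm_eq_abs,
      abs_of_nonneg hr0, mul_comm]
    refine mul_le_mul_of_nonneg_right ?_ hr0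
    have hi : Integrable (fun ξ : Euc d => G * ‖v‖ * (1 + ‖z‖ + ‖v‖) + G * ‖v‖ * r * ‖ξ‖) (gam d) :=
      (integrable_const _).add ((gam_integrable d).norm.const_mul _)
    refine (norm_integral_le_of_norm_le hi (Filter.Eventually.of_forall fun ξ => ?_)).trans ?_
    · have h1 := H.lapl_lip (z + r • ξ) v
      rw [show z + v + r • ξ = z + r • ξ + v by abel, Real.norm_eq_abs]
      refine h1.trans ?_
      have h2 := norm_add_le z (r • ξ)
      rw [norm_smul, Real.norm_eq_abs, abs_of_nonneg hr0] at h2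
      have : 0 ≤ G * ‖v‖ := by positivity
      nlinarith
    · rw [integral_add (integrable_const _) ((gam_integrable d).norm.const_mul _),
        integral_const_mul (G * ‖v‖ * r)]
      simp only [integral_const, probReal_univ, smul_eq_mul, one_mul]
      have h3 := gam_norm_le d
      have h4 : r * ∫ x, ‖x‖ ∂(gam d) ≤ s * Real.sqrt d :=
        mul_le_mul hr.2.le h3 (integral_nonneg fun _ => norm_nonneg _) hs
      have : 0 ≤ G * ‖v‖ := by positivity
      rw [hK]
      nlinarith

lemma heat (H : Pot f m L G) (z : Euc d) {s : ℝ} (hs : 0 ≤ s) :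
    ‖(∫ ξ, gradient f (z + s • ξ) ∂(gam d)) - gradient f z‖ ≤
      G * (s^2/2) * (1 + ‖z‖ + s * Real.sqrt d) := by
  set D := (∫ ξ, gradient f (z + s • ξ) ∂(gam d)) - gradient f z with hD
  have hL := H.hL.le
  have hG := H.hG.le
  have main : ∀ v : Euc d, inner ℝ D v ≤
      G * ‖v‖ * (1 + ‖z‖ + ‖v‖ + s * Real.sqrt d) * (s^2/2) + 2 * L * ‖v‖^2 := by
    intro v
    have h1 := (abs_le.1 (H.psi_diff z v hs)).2
    have h2 := (abs_le.1 (H.taylor z v)).2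
    have hIntg : Integrable (fun ξ => f (z + s • ξ + v)) (gam d) := by
      have := H.f_int (z + v) s
      refine this.congr (Filter.Eventually.of_forall fun ξ => ?_)
      simp only; congr 1; abel
    have hin : Integrable (fun ξ => inner ℝ (gradient f (z + s • ξ)) v) (gam d) :=
      (H.grad_int z s).inner_const v
    have h3 : (∫ ξ, inner ℝ (gradient f (z + s • ξ)) v ∂(gam d)) ≤
        ∫ ξ, (f (z + s • ξ + v) - f (z + s • ξ) + L * ‖v‖^2) ∂(gam d) := by
      refine integral_mono hin ((hIntg.sub (H.f_int z s)).add (integrable_const _)) fun ξ => ?_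
      have := (abs_le.1 (H.taylor (z + s • ξ) v)).1
      simp only
      linarith
    have hsub : Integrable (fun ξ => f (z + s • ξ + v) - f (z + s • ξ)) (gam d) :=
      hIntg.sub (H.f_int z s)
    rw [integral_add hsub (integrable_const _), integral_sub hIntg (H.f_int z s)] at h3
    simp only [integral_const, probReal_univ, smul_eq_mul, one_mul] at h3
    have h4 : (∫ ξ, f (z + s • ξ + v) ∂(gam d)) = ∫ ξ, f (z + v + s • ξ) ∂(gam d) := by
      refine integral_congr_ae (Filter.Eventually.of_forall fun ξ => ?_)
      simp only; congr 1; abel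
    have h5 : (∫ ξ, inner ℝ (gradient f (z + s • ξ)) v ∂(gam d)) =
        inner ℝ (∫ ξ, gradient f (z + s • ξ) ∂(gam d)) v := by
      rw [real_inner_comm, ← integral_inner (H.grad_int z s)]
      simp_rw [real_inner_comm]
    rw [hD, inner_sub_left]
    rw [h4] at h3
    rw [h5] at h3
    linarith
  have hKD : ‖D‖ * ‖D‖ ≤ G * (s^2/2) * (1 + ‖z‖ + s * Real.sqrt d) * ‖D‖ := by
    set c := G * (s^2/2) * ‖D‖^2 + 2 * L * ‖D‖^2 with hc
    have hc0 : 0 ≤ c := by positivity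
    refine le_of_forall_pos_le_add fun e he => ?_
    set δ := e / (c + 1) with hδ
    have hδ0 : 0 < δ := by positivity
    have h := main (δ • D)
    rw [inner_smul_right, real_inner_self_eq_norm_sq, norm_smul, Real.norm_eq_abs,
      abs_of_pos hδ0] at h
    have hδc : δ * c ≤ e := by
      rw [hδ, div_mul_eq_mul_div, div_le_iff₀ (by positivity)]
      nlinarith
    have h' : δ * (‖D‖ * ‖D‖) ≤ δ * (G * (s^2/2) * (1 + ‖z‖ + s * Real.sqrt d) * ‖D‖ + δ * c) := by
      rw [hc]; nlinarith
    have := le_of_mul_le_mul_left h' hδ0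
    linarith
  by_cases h0 : ‖D‖ = 0
  · rw [h0]; positivity
  · exact le_of_mul_le_mul_right hKD (lt_of_le_of_ne (norm_nonneg _) (Ne.symm h0))

end Pot

/-! ### Couplings -/

/-- `μ` and `ν` have a coupling with root mean square cost at most `c`. -/
def Close {d : ℕ} (μ ν : Measure (Euc d)) (c : ℝ) : Prop :=
  0 ≤ c ∧ ∃ γ : Measure (Euc d × Euc d), IsProbabilityMeasure γ ∧ γ.map Prod.fst = μ ∧
    γ.map Prod.snd = ν ∧ ∫⁻ p, ‖p.1 - p.2‖ₑ ^ 2 ∂γ ≤ ENNReal.ofReal (c ^ 2)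

lemma eLpNorm_two_le {α : Type*} [MeasurableSpace α] {E : Type*} [NormedAddCommGroup E]
    (γ : Measure α) (g : α → E) {c : ℝ} (hc : 0 ≤ c) :
    eLpNorm g 2 γ ≤ ENNReal.ofReal c ↔ ∫⁻ p, ‖g p‖ₑ ^ 2 ∂γ ≤ ENNReal.ofReal (c ^ 2) := by
  have h := eLpNorm_nnreal_pow_eq_lintegral (μ := γ) (f := g) (p := 2) (by norm_num)
  have h2 : eLpNorm g 2 γ ^ 2 = ∫⁻ p, ‖g p‖ₑ ^ 2 ∂γ := by
    simpa using h
  rw [← h2, ENNReal.ofReal_pow hc]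
  exact (ENNReal.pow_le_pow_left_iff (by norm_num)).symm

lemma Close.mono {d : ℕ} {μ ν : Measure (Euc d)} {a b : ℝ} (h : Close μ ν a) (hab : a ≤ b) :
    Close μ ν b := by
  obtain ⟨ha, γ, h1, h2, h3, h4⟩ := h
  exact ⟨ha.trans hab, γ, h1, h2, h3, h4.trans (ENNReal.ofReal_le_ofReal (by gcongr))⟩

lemma Close.refl {d : ℕ} (μ : Measure (Euc d)) [IsProbabilityMeasure μ] : Close μ μ 0 := by
  refine ⟨le_rfl, μ.map (fun x => (x, x)), Measure.isProbabilityMeasure_map (by fun_prop), ?_, ?_, ?_⟩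
  · rw [Measure.map_map (by fun_prop) (by fun_prop)]; exact Measure.map_id
  · rw [Measure.map_map (by fun_prop) (by fun_prop)]; exact Measure.map_id
  · rw [lintegral_map (by fun_prop) (by fun_prop)]; simp

lemma Close.symm {d : ℕ} {μ ν : Measure (Euc d)} {a : ℝ} (h : Close μ ν a) : Close ν μ a := by
  obtain ⟨ha, γ, h1, h2, h3, h4⟩ := h
  refine ⟨ha, γ.map Prod.swap, Measure.isProbabilityMeasure_map (by fun_prop), ?_, ?_, ?_⟩
  · rw [Measure.map_map (by fun_prop) (by fun_prop)]; exact h3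
  · rw [Measure.map_map (by fun_prop) (by fun_prop)]; exact h2
  · rw [lintegral_map (by fun_prop) (by fun_prop)]
    refine le_trans (le_of_eq ?_) h4
    refine lintegral_congr fun p => ?_
    simp only [Prod.fst_swap, Prod.snd_swap]
    rw [← enorm_neg]; congr 2; abel

lemma Close.prob {d : ℕ} {μ ν : Measure (Euc d)} {a : ℝ} (h : Close μ ν a) :
    IsProbabilityMeasure μ := by
  obtain ⟨ha, γ, h1, h2, h3, h4⟩ := h
  rw [← h2]; exact Measure.isProbabilityMeasure_map (by fun_prop)

lemma Close.trans {d : ℕ} {μ ν ρ : Measure (Euc d)} {a b : ℝ} (h : Close μ ν a)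
    (h' : Close ν ρ b) : Close μ ρ (a + b) := by
  obtain ⟨hb, γ2, i2, g1, g2, g3⟩ := h'
  obtain ⟨ha, γ1, i1, s1, s2, s3⟩ := h.symm
  have iν : IsProbabilityMeasure ν := by
    rw [← s1]; exact Measure.isProbabilityMeasure_map (by fun_prop)
  have key : ∃ Θ : Measure (Euc d × (Euc d × Euc d)), IsProbabilityMeasure Θ ∧
      Θ.map (fun q => (q.1, q.2.1)) = γ1 ∧ Θ.map (fun q => (q.1, q.2.2)) = γ2 := by
    refine ⟨ν ⊗ₘ (γ1.condKernel ×ₖ γ2.condKernel), ?_, ?_, ?_⟩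
    · infer_instance
    · have := Measure.compProd_map (μ := ν) (κ := γ1.condKernel ×ₖ γ2.condKernel)
        (f := Prod.fst) measurable_fst
      have e : (γ1.condKernel ×ₖ γ2.condKernel).map Prod.fst = γ1.condKernel := by
        rw [← Kernel.fst_eq, Kernel.fst_prod]
      rw [e] at this
      have e2 : ν ⊗ₘ γ1.condKernel = γ1 := by
        have := γ1.disintegrate γ1.condKernel
        rwa [Measure.fst, s1] at this
      rw [e2] at this
      exact this.symm
    · have := Measure.compProd_map (μ := ν) (κ := γ1.condKernel ×ₖ γ2.condKernel)
        (f := Prod.snd) measurable_snd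
      have e : (γ1.condKernel ×ₖ γ2.condKernel).map Prod.snd = γ2.condKernel := by
        rw [← Kernel.snd_eq, Kernel.snd_prod]
      rw [e] at this
      have e2 : ν ⊗ₘ γ2.condKernel = γ2 := by
        have := γ2.disintegrate γ2.condKernel
        rwa [Measure.fst, g1] at this
      rw [e2] at this
      exact this.symm
  obtain ⟨Θ, iΘ, t1, t2⟩ := key
  refine ⟨by positivity, Θ.map (fun q => q.2), Measure.isProbabilityMeasure_map (by fun_prop),
    ?_, ?_, ?_⟩
  · rw [Measure.map_map (by fun_prop) (by fun_prop), ← s2, ← t1,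
      Measure.map_map (by fun_prop) (by fun_prop)]; rfl
  · rw [Measure.map_map (by fun_prop) (by fun_prop), ← g2, ← t2,
      Measure.map_map (by fun_prop) (by fun_prop)]; rfl
  · rw [lintegral_map (by fun_prop) (by fun_prop)]
    rw [← t1, lintegral_map (by fun_prop) (by fun_prop)] at s3
    rw [← t2, lintegral_map (by fun_prop) (by fun_prop)] at g3
    rw [← eLpNorm_two_le Θ (fun q => q.1 - q.2.1) ha] at s3
    rw [← eLpNorm_two_le Θ (fun q => q.1 - q.2.2) hb] at g3
    rw [← eLpNorm_two_le Θ (fun q => q.2.1 - q.2.2) (by positivity), ENNReal.ofReal_add ha hb]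
    have : (fun q : Euc d × (Euc d × Euc d) => q.2.1 - q.2.2) =
        (fun q => -(q.1 - q.2.1)) + (fun q => q.1 - q.2.2) := by
      ext1 q; simp
    rw [this]
    refine (eLpNorm_add_le (by fun_prop) (by fun_prop) (by norm_num)).trans ?_
    refine add_le_add ?_ g3
    exact (eLpNorm_neg (fun q : Euc d × (Euc d × Euc d) => q.1 - q.2.1) 2 Θ).le.trans s3

lemma Close.W2_le {d : ℕ} {μ ν : Measure (Euc d)} {a : ℝ} (h : Close μ ν a) : W2 μ ν ≤ a := by
  obtain ⟨ha, γ, h1, h2, h3, h4⟩ := h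
  rw [W2]
  apply Real.sqrt_le_iff.2 ⟨ha, ?_⟩
  apply ENNReal.toReal_le_of_le_ofReal (by positivity)
  exact (iInf₂_le (f := fun (γ : Measure (Euc d × Euc d)) (_ : γ ∈ {γ : Measure (Euc d × Euc d) |
        IsProbabilityMeasure γ ∧ γ.map Prod.fst = μ ∧ γ.map Prod.snd = ν}) =>
      ∫⁻ p, (‖p.1 - p.2‖₊ : ℝ≥0∞) ^ 2 ∂γ) γ ⟨h1, h2, h3⟩).trans h4

lemma close_W2 {d : ℕ} {μ ν : Measure (Euc d)} [IsProbabilityMeasure μ] [IsProbabilityMeasure ν]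
    (hμ : ∫⁻ x, ‖x‖ₑ ^ 2 ∂μ < ⊤) (hν : ∫⁻ x, ‖x‖ₑ ^ 2 ∂ν < ⊤) {δ : ℝ} (hδ : 0 < δ) :
    Close μ ν (W2 μ ν + δ) := by
  set I : ℝ≥0∞ := (⨅ γ ∈ {γ : Measure (Euc d × Euc d) |
        IsProbabilityMeasure γ ∧ γ.map Prod.fst = μ ∧ γ.map Prod.snd = ν},
      ∫⁻ p, (‖p.1 - p.2‖₊ : ℝ≥0∞) ^ 2 ∂γ) with hI
  have hW : W2 μ ν = Real.sqrt I.toReal := rfl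
  have hfin : I < ⊤ := by
    have : I ≤ ∫⁻ p, (‖p.1 - p.2‖₊ : ℝ≥0∞) ^ 2 ∂(μ.prod ν) := by
      rw [hI]
      exact iInf₂_le (f := fun (γ : Measure (Euc d × Euc d)) (_ : γ ∈ {γ : Measure (Euc d × Euc d) |
        IsProbabilityMeasure γ ∧ γ.map Prod.fst = μ ∧ γ.map Prod.snd = ν}) =>
        ∫⁻ p, (‖p.1 - p.2‖₊ : ℝ≥0∞) ^ 2 ∂γ) (μ.prod ν) ⟨inferInstance, by simp, by simp⟩
    refine this.trans_lt ?_
    have hb : ∀ p : Euc d × Euc d, (‖p.1 - p.2‖₊ : ℝ≥0∞) ^ 2 ≤ 2 * ‖p.1‖ₑ ^ 2 + 2 * ‖p.2‖ₑ^2 := by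
      intro p
      have h0 : ‖p.1 - p.2‖₊ ^ 2 ≤ 2 * ‖p.1‖₊ ^ 2 + 2 * ‖p.2‖₊ ^ 2 := by
        rw [← NNReal.coe_le_coe]; push_cast
        nlinarith [norm_sub_le p.1 p.2, norm_nonneg p.1, norm_nonneg p.2, norm_nonneg (p.1 - p.2),
          sq_nonneg (‖p.1‖ - ‖p.2‖)]
      change ((‖p.1 - p.2‖₊ : ℝ≥0∞)) ^ 2 ≤ 2 * (‖p.1‖₊ : ℝ≥0∞) ^ 2 + 2 * (‖p.2‖₊ : ℝ≥0∞) ^ 2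
      exact_mod_cast h0
    refine (lintegral_mono hb).trans_lt ?_
    rw [lintegral_add_left (by fun_prop), lintegral_const_mul _ (by fun_prop),
      lintegral_const_mul _ (by fun_prop)]
    have e1 : ∫⁻ p : Euc d × Euc d, ‖p.1‖ₑ ^ 2 ∂(μ.prod ν) = ∫⁻ x, ‖x‖ₑ ^ 2 ∂μ := by
      conv_rhs => rw [show μ = (μ.prod ν).map Prod.fst by simp]
      rw [lintegral_map (by fun_prop) (by fun_prop)]
    have e2 : ∫⁻ p : Euc d × Euc d, ‖p.2‖ₑ ^ 2 ∂(μ.prod ν) = ∫⁻ x, ‖x‖ₑ ^ 2 ∂ν := by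
      conv_rhs => rw [show ν = (μ.prod ν).map Prod.snd by simp]
      rw [lintegral_map (by fun_prop) (by fun_prop)]
    rw [e1, e2]
    exact ENNReal.add_lt_top.2 ⟨ENNReal.mul_lt_top (by simp) hμ, ENNReal.mul_lt_top (by simp) hν⟩
  have hWn : 0 ≤ W2 μ ν := Real.sqrt_nonneg _
  have hlt : I < ENNReal.ofReal ((W2 μ ν + δ)^2) := by
    rw [ENNReal.lt_ofReal_iff_toReal_lt hfin.ne]
    have : W2 μ ν ^ 2 = I.toReal := by rw [hW, Real.sq_sqrt ENNReal.toReal_nonneg]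
    nlinarith
  rw [hI] at hlt
  simp only [iInf_lt_iff] at hlt
  obtain ⟨γ, ⟨h1, h2, h3⟩, h4⟩ := hlt
  exact ⟨by positivity, γ, h1, h2, h3, h4.le⟩


/-! ### The LMC transition operator -/

/-- One LMC step as a function of state and noise. -/
def phi {d : ℕ} (f : Euc d → ℝ) (h : ℝ) (p : Euc d × Euc d) : Euc d :=
  p.1 - h • gradient f p.1 + Real.sqrt (2 * h) • p.2

/-- The LMC transition operator on measures. -/
def stp {d : ℕ} (f : Euc d → ℝ) (h : ℝ) (ν : Measure (Euc d)) : Measure (Euc d) :=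
  (ν.prod (gam d)).map (phi f h)

lemma lint_sq_add {d : ℕ} {α : Type*} [MeasurableSpace α] (P : Measure α) [IsProbabilityMeasure P]
    (A : Euc d) {M : α → Euc d} (hM : MemLp M 2 P) :
    ∫⁻ t, ‖A + M t‖ₑ ^ 2 ∂P =
      ENNReal.ofReal (‖A‖^2 + 2 * inner ℝ A (∫ t, M t ∂P) + ∫ t, ‖M t‖^2 ∂P) := by
  have hi : Integrable M P := hM.integrable (by norm_num)
  have hi2 : Integrable (fun t => ‖M t‖^2) P := hM.integrable_norm_pow (by norm_num)
  have hin : Integrable (fun t => inner ℝ A (M t)) P := hi.const_inner A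
  have e : ∀ t, ‖A + M t‖^2 = ‖A‖^2 + 2 * inner ℝ A (M t) + ‖M t‖^2 := fun t => by
    rw [norm_add_sq_real]
  have hI : Integrable (fun t => ‖A + M t‖^2) P := by
    simp only [e]
    exact ((integrable_const _).add (hin.const_mul 2)).add hi2
  have h1 : ∫ t, ‖A + M t‖^2 ∂P = ‖A‖^2 + 2 * inner ℝ A (∫ t, M t ∂P) + ∫ t, ‖M t‖^2 ∂P := by
    simp only [e]
    have hc : Integrable (fun t => ‖A‖^2 + 2 * inner ℝ A (M t)) P :=
      (integrable_const _).add (hin.const_mul 2)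
    rw [integral_add hc hi2, integral_add (integrable_const _) (hin.const_mul 2), integral_const_mul, integral_inner hi]
    simp
  rw [← h1, ofReal_integral_eq_lintegral_ofReal hI (Filter.Eventually.of_forall fun t => by positivity)]
  refine lintegral_congr fun t => ?_
  rw [ENNReal.ofReal_pow (norm_nonneg _), ofReal_norm]

lemma map_left {α β δ : Type*} [MeasurableSpace α] [MeasurableSpace β] [MeasurableSpace δ]
    (γ : Measure α) (ρ : Measure β) [IsProbabilityMeasure γ] [IsProbabilityMeasure ρ]
    {u : α → δ} (hu : Measurable u) :
    (γ.prod ρ).map (fun q => (u q.1, q.2)) = (γ.map u).prod ρ := by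
  have := Measure.map_prod_map γ ρ hu measurable_id
  rw [Measure.map_id] at this
  exact this.symm

lemma lint_left {α β : Type*} [MeasurableSpace α] [MeasurableSpace β]
    (γ : Measure α) (ρ : Measure β) [IsProbabilityMeasure γ] [IsProbabilityMeasure ρ]
    {g : α → ℝ≥0∞} (hg : Measurable g) :
    ∫⁻ q, g q.1 ∂(γ.prod ρ) = ∫⁻ p, g p ∂γ := by
  have h : (γ.prod ρ).map Prod.fst = γ := by simp
  rw [← lintegral_map hg measurable_fst, h]

namespace Pot
variable {d : ℕ} {f : Euc d → ℝ} {m L G : ℝ}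

lemma phi_cont (H : Pot f m L G) (h : ℝ) : Continuous (phi f h) := by
  have hc := H.grad_cont
  unfold phi
  exact (continuous_fst.sub ((hc.comp continuous_fst).const_smul h)).add (continuous_snd.const_smul (Real.sqrt (2 * h)))

lemma phi_meas (H : Pot f m L G) (h : ℝ) : Measurable (phi f h) := (H.phi_cont h).measurable

lemma stp_prob (H : Pot f m L G) (h : ℝ) (ν : Measure (Euc d)) [IsProbabilityMeasure ν] :
    IsProbabilityMeasure (stp f h ν) :=
  Measure.isProbabilityMeasure_map (H.phi_meas h).aemeasurable

set_option maxHeartbeats 1000000 in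
lemma contr_close (H : Pot f m L G) {h : ℝ} (h0 : 0 ≤ h) (hh : h * L ≤ 1) {μ ν : Measure (Euc d)}
    {a : ℝ} (hc : Close μ ν a) : Close (stp f h μ) (stp f h ν) ((1 - m * h) * a) := by
  obtain ⟨ha, γ, i, g1, g2, g3⟩ := hc
  have hmh : 0 ≤ 1 - m * h := by nlinarith [H.hmL, H.hm]
  have mphi := H.phi_meas h
  have m1 : Measurable (fun q : (Euc d × Euc d) × Euc d => phi f h (q.1.1, q.2)) :=
    mphi.comp (by fun_prop)
  have m2 : Measurable (fun q : (Euc d × Euc d) × Euc d => phi f h (q.1.2, q.2)) :=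
    mphi.comp (by fun_prop)
  refine ⟨by positivity, (γ.prod (gam d)).map
    (fun q => (phi f h (q.1.1, q.2), phi f h (q.1.2, q.2))),
    Measure.isProbabilityMeasure_map (m1.prodMk m2).aemeasurable, ?_, ?_, ?_⟩
  · rw [Measure.map_map measurable_fst (m1.prodMk m2), stp, ← g1, ← map_left γ (gam d) measurable_fst,
      Measure.map_map mphi (by fun_prop)]
    rfl
  · rw [Measure.map_map measurable_snd (m1.prodMk m2), stp, ← g2, ← map_left γ (gam d) measurable_snd,
      Measure.map_map mphi (by fun_prop)]
    rfl
  · rw [lintegral_map (by fun_prop) (m1.prodMk m2)]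
    have hb : ∀ q : (Euc d × Euc d) × Euc d,
        ‖phi f h (q.1.1, q.2) - phi f h (q.1.2, q.2)‖ₑ ^ 2 ≤
        ENNReal.ofReal ((1 - m*h)^2) * ‖q.1.1 - q.1.2‖ₑ^2 := by
      intro q
      have e : phi f h (q.1.1, q.2) - phi f h (q.1.2, q.2) =
        (q.1.1 - h • gradient f q.1.1) - (q.1.2 - h • gradient f q.1.2) := by
        simp only [phi]; abel
      rw [e, ← ofReal_norm, ← ofReal_norm, ← ENNReal.ofReal_pow (norm_nonneg _),
        ← ENNReal.ofReal_pow (norm_nonneg _), ← ENNReal.ofReal_mul (by positivity), ← mul_pow]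
      exact ENNReal.ofReal_le_ofReal (pow_le_pow_left₀ (norm_nonneg _) (H.contr h0 hh _ _) 2)
    refine (lintegral_mono hb).trans ?_
    rw [lintegral_const_mul _ (by fun_prop)]
    rw [lint_left γ (gam d) (g := fun p => ‖p.1 - p.2‖ₑ^2) (by fun_prop), mul_pow, ENNReal.ofReal_mul (by positivity)]
    gcongr

lemma noise_memLp (s : ℝ) : MemLp (fun ξ : Euc d => s • ξ) 2 (gam d) :=
  (gam_memLp d 2 (by simp)).const_smul s

lemma noise_lint (a : Euc d) (s : ℝ) :
    ∫⁻ ξ, ‖a + s • ξ‖ₑ ^ 2 ∂(gam d) = ENNReal.ofReal (‖a‖^2 + s^2 * d) := by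
  rw [lint_sq_add (gam d) a (noise_memLp s), integral_smul, gam_integral]
  simp only [norm_smul, mul_pow]
  rw [integral_const_mul, gam_sq]
  simp

lemma moment (H : Pot f m L G) {h : ℝ} (h0 : 0 ≤ h) (hh : h * L ≤ 1) {ν : Measure (Euc d)}
    [IsProbabilityMeasure ν] {R : ℝ} (hR0 : 0 ≤ R)
    (hR : ∫⁻ x, ‖x‖ₑ^2 ∂ν ≤ ENNReal.ofReal R) :
    ∫⁻ x, ‖x‖ₑ^2 ∂(stp f h ν) ≤ ENNReal.ofReal ((1 - m*h)^2 * R + 2 * h * d) := by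
  rw [stp, lintegral_map (by fun_prop) (H.phi_meas h)]
  rw [lintegral_prod _ (by have := H.phi_meas h; fun_prop)]
  have hb : ∀ x, ∫⁻ ξ, ‖phi f h (x, ξ)‖ₑ^2 ∂(gam d) ≤
      ENNReal.ofReal ((1 - m*h)^2) * ‖x‖ₑ^2 + ENNReal.ofReal (2 * h * d) := by
    intro x
    simp only [phi]
    rw [noise_lint, Real.sq_sqrt (by positivity), ← ofReal_norm, ← ENNReal.ofReal_pow (norm_nonneg _),
      ← ENNReal.ofReal_mul (by positivity), ← ENNReal.ofReal_add (by positivity) (by positivity),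
      ← mul_pow]
    refine ENNReal.ofReal_le_ofReal ?_
    gcongr
    have := H.contr h0 hh x 0
    simpa [H.hgrad0] using this
  refine (lintegral_mono hb).trans ?_
  rw [lintegral_add_right _ (by fun_prop), lintegral_const_mul _ (by fun_prop),
    ENNReal.ofReal_add (by positivity) (by positivity), ENNReal.ofReal_mul (p := (1 - m * h)^2) (by positivity)]
  simp only [lintegral_const, measure_univ, mul_one]
  gcongr

end Pot

/-! ### Step halving -/

lemma mink {d : ℕ} {γ : Measure (Euc d × Euc d)} [IsProbabilityMeasure γ] {a R a1 b c : ℝ}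
    (ha : 0 ≤ a) (hR : 0 ≤ R) (ha1 : 0 ≤ a1) (hb : 0 ≤ b) (hc : 0 ≤ c)
    (h1 : ∫⁻ p, ‖p.1 - p.2‖ₑ ^ 2 ∂γ ≤ ENNReal.ofReal (a^2))
    (h2 : ∫⁻ p, ‖p.2‖ₑ ^ 2 ∂γ ≤ ENNReal.ofReal (R^2)) :
    ∫⁻ p, ENNReal.ofReal ((a1 * ‖p.1 - p.2‖ + b + c * ‖p.2‖)^2) ∂γ ≤
      ENNReal.ofReal ((a1 * a + b + c * R)^2) := by
  rw [← eLpNorm_two_le γ (fun p => p.1 - p.2) ha] at h1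
  rw [← eLpNorm_two_le γ (fun p => p.2) hR] at h2
  have e : ∀ p : Euc d × Euc d, ENNReal.ofReal ((a1 * ‖p.1 - p.2‖ + b + c * ‖p.2‖)^2) =
      ‖(a1 * ‖p.1 - p.2‖ + b + c * ‖p.2‖ : ℝ)‖ₑ^2 := by
    intro p
    rw [Real.enorm_eq_ofReal (by positivity), ENNReal.ofReal_pow (by positivity)]
  simp only [e]
  rw [← eLpNorm_two_le γ _ (by positivity)]
  have e2 : (fun p : Euc d × Euc d => a1 * ‖p.1 - p.2‖ + b + c * ‖p.2‖) =
      ((fun p => a1 * ‖p.1 - p.2‖) + (fun p => b)) + (fun p => c * ‖p.2‖) := by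
    ext1 p; rfl
  rw [e2]
  refine (eLpNorm_add_le (by fun_prop) (by fun_prop) (by norm_num)).trans ?_
  rw [ENNReal.ofReal_add (by positivity) (by positivity),
    ENNReal.ofReal_add (by positivity) (by positivity)]
  refine add_le_add ((eLpNorm_add_le (by fun_prop) (by fun_prop) (by norm_num)).trans
    (add_le_add ?_ ?_)) ?_
  · have : eLpNorm (fun p : Euc d × Euc d => a1 * ‖p.1 - p.2‖) 2 γ =
        ENNReal.ofReal a1 * eLpNorm (fun p : Euc d × Euc d => p.1 - p.2) 2 γ := by
      rw [← eLpNorm_norm (f := fun p : Euc d × Euc d => p.1 - p.2), ← Real.enorm_eq_ofReal ha1,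
        ← eLpNorm_const_smul]
      rfl
    rw [this, ENNReal.ofReal_mul ha1]
    gcongr
  · rw [eLpNorm_const _ (by norm_num) (IsProbabilityMeasure.ne_zero _)]
    simp [Real.enorm_eq_ofReal hb]
  · have : eLpNorm (fun p : Euc d × Euc d => c * ‖p.2‖) 2 γ =
        ENNReal.ofReal c * eLpNorm (fun p : Euc d × Euc d => p.2) 2 γ := by
      rw [← eLpNorm_norm (f := fun p : Euc d × Euc d => p.2), ← Real.enorm_eq_ofReal hc,
        ← eLpNorm_const_smul]
      rfl
    rw [this, ENNReal.ofReal_mul hc]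
    gcongr

namespace Pot
variable {d : ℕ} {f : Euc d → ℝ} {m L G : ℝ}

lemma noise_int (a : Euc d) (s : ℝ) :
    Integrable (fun ξ => ‖a + s • ξ‖^2) (gam d) ∧ ∫ ξ, ‖a + s • ξ‖^2 ∂(gam d) = ‖a‖^2 + s^2 * d := by
  have hI : Integrable (fun ξ => ‖a + s • ξ‖^2) (gam d) :=
    ((memLp_const a).add (noise_memLp s)).integrable_norm_pow (by norm_num)
  refine ⟨hI, ?_⟩
  have h := noise_lint a s
  have h2 : ENNReal.ofReal (∫ ξ, ‖a + s • ξ‖^2 ∂(gam d)) = ENNReal.ofReal (‖a‖^2 + s^2 * d) := by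
    rw [← h, ofReal_integral_eq_lintegral_ofReal hI
      (Filter.Eventually.of_forall fun t => by positivity)]
    refine lintegral_congr fun t => ?_
    rw [ENNReal.ofReal_pow (norm_nonneg _), ofReal_norm]
  rwa [ENNReal.ofReal_eq_ofReal_iff (integral_nonneg fun t => by positivity) (by positivity)] at h2

lemma half_pt (H : Pot f m L G) {h : ℝ} (h0 : 0 ≤ h) (hh : h * L ≤ 1) (A z : Euc d) :
    ∫⁻ ξ, ‖A + h • (gradient f (z - h • gradient f z + Real.sqrt (2*h) • ξ) - gradient f z)‖ₑ ^ 2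
        ∂(gam d) ≤
      ENNReal.ofReal ((‖A‖ + (h^2 * G * (1 + Real.sqrt (2*h) * Real.sqrt d)
        + h^2 * (G + L^2) * ‖z‖))^2 + h^2*L^2*(h^2*L^2*‖z‖^2 + 2*h*d)) := by
  set s := Real.sqrt (2*h) with hs
  have hs0 : 0 ≤ s := Real.sqrt_nonneg _
  have hs2 : s^2 = 2*h := Real.sq_sqrt (by positivity)
  have hL := H.hL
  set w := z - h • gradient f z with hw
  have hwz : ‖w‖ ≤ ‖z‖ := by
    have := H.contr h0 hh z 0
    simp only [H.hgrad0, smul_zero, sub_zero] at this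
    refine this.trans ?_
    nlinarith [norm_nonneg z, H.hm, mul_nonneg H.hm.le h0, mul_nonneg (mul_nonneg H.hm.le h0) (norm_nonneg z)]
  have hgz := H.grad_le z
  have hwz2 : ‖w - z‖ ≤ h * (L * ‖z‖) := by
    rw [hw, sub_sub_cancel_left, norm_neg, norm_smul, Real.norm_eq_abs, abs_of_nonneg h0]
    gcongr
  set M : Euc d → Euc d := fun ξ => h • (gradient f (w + s • ξ) - gradient f z) with hM
  have hgc := H.grad_cont
  have hMm : AEStronglyMeasurable M (gam d) := by
    apply Continuous.aestronglyMeasurable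
    exact ((hgc.comp (by fun_prop : Continuous fun ξ : Euc d => w + s • ξ)).sub
      continuous_const).const_smul h
  have hMb : ∀ ξ, ‖M ξ‖ ≤ h * L * ‖(w - z) + s • ξ‖ := by
    intro ξ
    rw [hM]; simp only
    rw [norm_smul, Real.norm_eq_abs, abs_of_nonneg h0, mul_assoc]
    gcongr
    have := H.grad_lip (w + s • ξ) z
    rwa [show w + s • ξ - z = (w - z) + s • ξ by abel] at this
  have hM2 : MemLp M 2 (gam d) := by
    have h1 : MemLp (fun ξ : Euc d => (w - z) + s • ξ) 2 (gam d) :=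
      (memLp_const (w - z)).add (noise_memLp s)
    refine MemLp.of_le_mul h1 hMm (c := h * L) (Filter.Eventually.of_forall hMb)
  rw [lint_sq_add (gam d) A hM2]
  apply ENNReal.ofReal_le_ofReal
  have hMI : ‖∫ ξ, M ξ ∂(gam d)‖ ≤ h^2 * G * (1 + s * Real.sqrt d) + h^2 * (G + L^2) * ‖z‖ := by
    have e : ∫ ξ, M ξ ∂(gam d) = h • (((∫ ξ, gradient f (w + s • ξ) ∂(gam d)) - gradient f w)
        + (gradient f w - gradient f z)) := by
      rw [hM, integral_smul, integral_sub (H.grad_int w s) (integrable_const _)]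
      simp
    rw [e, norm_smul, Real.norm_eq_abs, abs_of_nonneg h0]
    have h1 := H.heat w hs0
    have h2 := H.grad_lip w z
    have h3 := norm_add_le ((∫ ξ, gradient f (w + s • ξ) ∂(gam d)) - gradient f w)
      (gradient f w - gradient f z)
    rw [hs2] at h1
    have h4 : G * (2*h/2) * (1 + ‖w‖ + s * Real.sqrt d) ≤ G * h * (1 + ‖z‖ + s * Real.sqrt d) := by
      rw [mul_div_cancel_left₀ _ (by norm_num)]
      have := H.hG
      gcongr
    have h5 : L * ‖w - z‖ ≤ L * (h * (L * ‖z‖)) := by gcongr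
    calc h * _ ≤ h * (G * h * (1 + ‖z‖ + s * Real.sqrt d) + L * (h * (L * ‖z‖))) := by
          gcongr; linarith
      _ = _ := by ring
  have hMS : ∫ ξ, ‖M ξ‖^2 ∂(gam d) ≤ h^2*L^2*(h^2*L^2*‖z‖^2 + 2*h*d) := by
    obtain ⟨n1, n2⟩ := noise_int (w - z) s
    calc ∫ ξ, ‖M ξ‖^2 ∂(gam d) ≤ ∫ ξ, h^2 * L^2 * ‖(w - z) + s • ξ‖^2 ∂(gam d) := by
          refine integral_mono (hM2.integrable_norm_pow (by norm_num)) (n1.const_mul _) fun ξ => ?_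
          have := pow_le_pow_left₀ (norm_nonneg _) (hMb ξ) 2
          simp only [mul_pow] at this ⊢
          exact this
      _ = h^2 * L^2 * (‖w - z‖^2 + 2*h*d) := by rw [integral_const_mul, n2, hs2]
      _ ≤ h^2 * L^2 * ((h * (L * ‖z‖))^2 + 2*h*d) := by gcongr
      _ = _ := by ring
  have hin : inner ℝ A (∫ ξ, M ξ ∂(gam d)) ≤ ‖A‖ * ‖∫ ξ, M ξ ∂(gam d)‖ := real_inner_le_norm _ _
  set B := h^2 * G * (1 + s * Real.sqrt d) + h^2 * (G + L^2) * ‖z‖ with hB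
  have hB0 : 0 ≤ B := (norm_nonneg _).trans hMI
  have h6 : ‖A‖ * ‖∫ ξ, M ξ ∂(gam d)‖ ≤ ‖A‖ * B := by gcongr
  nlinarith [norm_nonneg A]

set_option maxHeartbeats 2000000 in
lemma half_close (H : Pot f m L G) {h : ℝ} (h0 : 0 ≤ h) (hh : 2 * h * L ≤ 1) {μ ν : Measure (Euc d)}
    {a R : ℝ} (hR0 : 0 ≤ R) (hR : ∫⁻ x, ‖x‖ₑ^2 ∂ν ≤ ENNReal.ofReal (R^2))
    (hc : Close μ ν a) : Close (stp f (2*h) μ) (stp f h (stp f h ν))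
      (Real.sqrt (((1 - m * (2 * h)) * a + h^2 * G * (1 + Real.sqrt (2*h) * Real.sqrt d)
        + h^2 * (G + L^2) * R)^2 + h^2*L^2*(h^2*L^2*R^2 + 2*h*d))) := by
  obtain ⟨ha, γ, i, g1, g2, g3⟩ := hc
  have hL := H.hL
  have hG := H.hG
  have hmh : 0 ≤ 1 - m * (2 * h) := by nlinarith [H.hmL, H.hm]
  have hhL : h * L ≤ 1 := by nlinarith [mul_nonneg h0 hL.le]
  have iν : IsProbabilityMeasure ν := by
    rw [← g2]; exact Measure.isProbabilityMeasure_map (by fun_prop)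
  have mphi := H.phi_meas h
  have mphi2 := H.phi_meas (2*h)
  have ms : Measurable (fun q : (Euc d × Euc d) × (Euc d × Euc d) =>
      (q.1.1, (1 / Real.sqrt 2) • (q.2.1 + q.2.2))) := by fun_prop
  have m1 : Measurable (fun q : (Euc d × Euc d) × (Euc d × Euc d) =>
      phi f (2*h) (q.1.1, (1 / Real.sqrt 2) • (q.2.1 + q.2.2))) := mphi2.comp ms
  have mz1 : Measurable (fun q : (Euc d × Euc d) × (Euc d × Euc d) =>
      phi f h (q.1.2, q.2.1)) := mphi.comp (by fun_prop)
  have mz1' : Measurable (fun q : (Euc d × Euc d) × (Euc d × Euc d) =>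
      (phi f h (q.1.2, q.2.1), q.2.2)) := mz1.prodMk (by fun_prop)
  have m2 : Measurable (fun q : (Euc d × Euc d) × (Euc d × Euc d) =>
      phi f h (phi f h (q.1.2, q.2.1), q.2.2)) := mphi.comp mz1'
  refine ⟨Real.sqrt_nonneg _, (γ.prod ((gam d).prod (gam d))).map
    (fun q => (phi f (2*h) (q.1.1, (1 / Real.sqrt 2) • (q.2.1 + q.2.2)),
      phi f h (phi f h (q.1.2, q.2.1), q.2.2))),
    Measure.isProbabilityMeasure_map (m1.prodMk m2).aemeasurable, ?_, ?_, ?_⟩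
  · rw [Measure.map_map measurable_fst (m1.prodMk m2), stp]
    have e1 : ((gam d).prod (gam d)).map (fun p => (1 / Real.sqrt 2) • (p.1 + p.2)) = gam d := by
      have := congrArg (fun ρ => Measure.map (fun x : Euc d => (1 / Real.sqrt 2) • x) ρ) (gam_sum d)
      rw [Measure.map_map (by fun_prop) (by fun_prop), Measure.map_map (by fun_prop) (by fun_prop)]
        at this
      have e2 : ((fun x : Euc d => (1 / Real.sqrt 2) • x) ∘ fun x => Real.sqrt 2 • x) = id := by
        ext1 x; simp [smul_smul]
      rw [e2, Measure.map_id] at this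
      exact this
    have e3 := Measure.map_prod_map γ ((gam d).prod (gam d)) (measurable_fst (α := Euc d) (β := Euc d))
      (by fun_prop : Measurable (fun p : Euc d × Euc d => (1 / Real.sqrt 2) • (p.1 + p.2)))
    rw [g1, e1] at e3
    rw [e3, Measure.map_map mphi2 (by fun_prop)]
    rfl
  · rw [Measure.map_map measurable_snd (m1.prodMk m2), stp, stp]
    have e3 : (ν.prod ((gam d).prod (gam d))) =
        (γ.prod ((gam d).prod (gam d))).map (fun q => (q.1.2, q.2)) := by
      rw [map_left γ _ measurable_snd, g2]
    have e4 := Measure.prodAssoc_prod (μ := ν) (ν := gam d) (τ := gam d)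
    have e5 : (ν.prod (gam d)).prod (gam d) =
        (ν.prod ((gam d).prod (gam d))).map MeasurableEquiv.prodAssoc.symm := by
      rw [← e4, Measure.map_map (by fun_prop) (by fun_prop)]
      simp
    have mpp : Measurable (fun q : (Euc d × Euc d) × Euc d => (phi f h q.1, q.2)) :=
      (mphi.comp measurable_fst).prodMk measurable_snd
    rw [← map_left _ (gam d) mphi, e5, e3, Measure.map_map mphi mpp,
      Measure.map_map (mphi.comp mpp) (by fun_prop),
      Measure.map_map ((mphi.comp mpp).comp (by fun_prop)) (by fun_prop)]
    rfl
  · rw [lintegral_map (by fun_prop) (m1.prodMk m2)]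
    have hs : Real.sqrt (2 * (2*h)) = Real.sqrt 2 * Real.sqrt (2*h) := by
      rw [Real.sqrt_mul (by norm_num)]
    have hb : ∀ q : (Euc d × Euc d) × (Euc d × Euc d),
        phi f (2*h) (q.1.1, (1 / Real.sqrt 2) • (q.2.1 + q.2.2)) -
          phi f h (phi f h (q.1.2, q.2.1), q.2.2) =
        ((q.1.1 - (2*h) • gradient f q.1.1) - (q.1.2 - (2*h) • gradient f q.1.2)) +
        h • (gradient f (q.1.2 - h • gradient f q.1.2 + Real.sqrt (2*h) • q.2.1)
          - gradient f q.1.2) := by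
      intro q
      simp only [phi]
      rw [hs, smul_smul, show Real.sqrt 2 * Real.sqrt (2*h) * (1 / Real.sqrt 2) = Real.sqrt (2*h) by
        field_simp]
      module
    simp only [hb]
    have hgc := H.grad_cont
    have mI : Measurable (fun q : (Euc d × Euc d) × (Euc d × Euc d) =>
        ‖((q.1.1 - (2*h) • gradient f q.1.1) - (q.1.2 - (2*h) • gradient f q.1.2)) +
        h • (gradient f (q.1.2 - h • gradient f q.1.2 + Real.sqrt (2*h) • q.2.1)
          - gradient f q.1.2)‖ₑ^2) := by
      simp only [← hb]
      exact ((m1.sub m2).enorm).pow_const 2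
    rw [lintegral_prod _ mI.aemeasurable]
    have hpt : ∀ p : Euc d × Euc d, ∫⁻ y : Euc d × Euc d,
        ‖((p.1 - (2*h) • gradient f p.1) - (p.2 - (2*h) • gradient f p.2)) +
        h • (gradient f (p.2 - h • gradient f p.2 + Real.sqrt (2*h) • y.1)
          - gradient f p.2)‖ₑ^2 ∂((gam d).prod (gam d)) ≤
        ENNReal.ofReal (((1 - m * (2*h)) * ‖p.1 - p.2‖
          + h^2 * G * (1 + Real.sqrt (2*h) * Real.sqrt d) + h^2 * (G + L^2) * ‖p.2‖)^2) +
        (ENNReal.ofReal (h^2*L^2*(h^2*L^2)) * ‖p.2‖ₑ^2 + ENNReal.ofReal (h^2*L^2*(2*h*d))) := by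
      intro p
      rw [lint_left (gam d) (gam d) (g := fun y =>
        ‖((p.1 - (2*h) • gradient f p.1) - (p.2 - (2*h) • gradient f p.2)) +
        h • (gradient f (p.2 - h • gradient f p.2 + Real.sqrt (2*h) • y)
          - gradient f p.2)‖ₑ^2)]
      · refine (H.half_pt h0 hhL _ _).trans ?_
        rw [← ofReal_norm, ← ENNReal.ofReal_pow (norm_nonneg _), ← ENNReal.ofReal_mul (by positivity),
          ← ENNReal.ofReal_add (by positivity) (by positivity),
          ← ENNReal.ofReal_add (by positivity) (by positivity)]
        apply ENNReal.ofReal_le_ofReal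
        have hcon := H.contr (h := 2*h) (by positivity) hh p.1 p.2
        have h7 : ‖p.1 - (2*h) • gradient f p.1 - (p.2 - (2*h) • gradient f p.2)‖ +
            (h^2 * G * (1 + Real.sqrt (2*h) * Real.sqrt d) + h^2 * (G + L^2) * ‖p.2‖) ≤
            (1 - m * (2*h)) * ‖p.1 - p.2‖
          + h^2 * G * (1 + Real.sqrt (2*h) * Real.sqrt d) + h^2 * (G + L^2) * ‖p.2‖ := by linarith
        have h8 := pow_le_pow_left₀ (by positivity) h7 2
        linarith
      · have hc1 : Continuous (fun y : Euc d =>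
          (p.1 - (2*h) • gradient f p.1) - (p.2 - (2*h) • gradient f p.2) +
          h • (gradient f (p.2 - h • gradient f p.2 + Real.sqrt (2*h) • y) - gradient f p.2)) :=
          continuous_const.add (((hgc.comp (by fun_prop : Continuous fun y : Euc d =>
            p.2 - h • gradient f p.2 + Real.sqrt (2*h) • y)).sub continuous_const).const_smul h)
        exact (hc1.measurable.enorm).pow_const 2
    refine (lintegral_mono hpt).trans ?_
    have hR' : ∫⁻ p, ‖p.2‖ₑ ^ 2 ∂γ ≤ ENNReal.ofReal (R^2) := by
      rw [← g2, lintegral_map (by fun_prop) (by fun_prop)] at hR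
      exact hR
    rw [lintegral_add_left (by fun_prop), lintegral_add_right _ (by fun_prop),
      lintegral_const_mul _ (by fun_prop), Real.sq_sqrt (by positivity),
      ENNReal.ofReal_add (by positivity) (by positivity)]
    refine add_le_add (mink ha hR0 hmh (by positivity) (by positivity) g3 hR') ?_
    rw [mul_add, ENNReal.ofReal_add (by positivity) (by positivity)]
    simp only [lintegral_const, measure_univ, mul_one]
    gcongr
    calc _ ≤ ENNReal.ofReal (h^2*L^2*(h^2*L^2)) * ENNReal.ofReal (R^2) := by gcongr
      _ = _ := by rw [← ENNReal.ofReal_mul (by positivity)]; congr 1; ring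

end Pot

/-! ### Near-stationarity of the Gibbs measure: a Metropolis coupling -/

lemma mh_coupling {d : ℕ} (J : Measure (Euc d × Euc d)) [IsProbabilityMeasure J]
    {θ : Euc d × Euc d → ℝ≥0∞} (hθ : Measurable θ) (h1 : ∀ p, θ p ≤ 1)
    (hsym : (J.withDensity θ).map Prod.swap = J.withDensity θ) :
    ∃ Γ : Measure (Euc d × Euc d), IsProbabilityMeasure Γ ∧ Γ.map Prod.fst = J.map Prod.snd ∧
      Γ.map Prod.snd = J.map Prod.fst ∧
      ∫⁻ p, ‖p.1 - p.2‖ₑ^2 ∂Γ = ∫⁻ p, (1 - θ p) * ‖p.1 - p.2‖ₑ^2 ∂J := by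
  have hθ' : Measurable (fun p => 1 - θ p) := measurable_const.sub hθ
  have hsum : J.withDensity θ + J.withDensity (fun p => 1 - θ p) = J := by
    rw [← withDensity_add_left hθ]
    have : (θ + fun p => 1 - θ p) = 1 := by
      ext1 p
      simp only [Pi.add_apply, Pi.one_apply]
      exact add_tsub_cancel_of_le (h1 p)
    rw [this, withDensity_one]
  set J1 := J.withDensity θ with hJ1
  set J2 := J.withDensity (fun p => 1 - θ p) with hJ2
  have mdup : Measurable (fun p : Euc d × Euc d => (p.2, p.2)) := by fun_prop
  have hf : (J1.map (fun p => (p.2, p.2)) + J2.map Prod.swap).map Prod.fst = J.map Prod.snd := by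
    rw [Measure.map_add _ _ measurable_fst, Measure.map_map measurable_fst mdup,
      Measure.map_map measurable_fst measurable_swap]
    conv_rhs => rw [← hsum, Measure.map_add _ _ measurable_snd]
    rfl
  have hs : (J1.map (fun p => (p.2, p.2)) + J2.map Prod.swap).map Prod.snd = J.map Prod.fst := by
    rw [Measure.map_add _ _ measurable_snd, Measure.map_map measurable_snd mdup,
      Measure.map_map measurable_snd measurable_swap]
    conv_rhs => rw [← hsum, Measure.map_add _ _ measurable_fst, ← hsym,
      Measure.map_map measurable_fst measurable_swap]
    rfl
  refine ⟨J1.map (fun p => (p.2, p.2)) + J2.map Prod.swap, ?_, hf, hs, ?_⟩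
  · have : IsProbabilityMeasure ((J1.map (fun p => (p.2, p.2)) + J2.map Prod.swap).map Prod.fst) := by
      rw [hf]; exact Measure.isProbabilityMeasure_map measurable_snd.aemeasurable
    constructor
    have h := this.measure_univ
    rw [Measure.map_apply measurable_fst MeasurableSet.univ] at h
    simpa using h
  · rw [lintegral_add_measure, lintegral_map (by fun_prop) mdup,
      lintegral_map (by fun_prop) measurable_swap, hJ2,
      lintegral_withDensity_eq_lintegral_mul _ hθ' (by fun_prop)]
    simp only [sub_self, enorm_zero, Prod.fst_swap, Prod.snd_swap, Pi.mul_apply]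
    simp only [ne_eq, OfNat.ofNat_ne_zero, not_false_eq_true, zero_pow, lintegral_zero, zero_add]
    refine lintegral_congr fun p => ?_
    rw [← enorm_neg, neg_sub]

lemma swap_withDensity {d : ℕ} {S : Euc d × Euc d → ℝ≥0∞} (hS : Measurable S)
    (hsym : ∀ p, S p.swap = S p) :
    ((((volume : Measure (Euc d)).prod (volume : Measure (Euc d))).withDensity S).map Prod.swap) =
      ((volume : Measure (Euc d)).prod (volume : Measure (Euc d))).withDensity S := by
  refine Measure.ext_of_lintegral _ fun g hg => ?_
  have hgs : Measurable (fun p : Euc d × Euc d => g p.swap) := hg.comp measurable_swap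
  rw [lintegral_map hg measurable_swap, lintegral_withDensity_eq_lintegral_mul _ hS hgs,
    lintegral_withDensity_eq_lintegral_mul _ hS hg]
  have h := (Measure.measurePreserving_swap (μ := (volume : Measure (Euc d)))
    (ν := (volume : Measure (Euc d)))).lintegral_comp (hS.mul hg)
  rw [← h]
  refine lintegral_congr fun p => ?_
  simp [hsym]

lemma lint_affine {d : ℕ} (a : Euc d) {s : ℝ} (hs : s ≠ 0) {F : Euc d → ℝ≥0∞} (hF : Measurable F) :
    ∫⁻ ξ, F (a + s • ξ) = ENNReal.ofReal |(s ^ Module.finrank ℝ (Euc d))⁻¹| * ∫⁻ y, F y := by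
  have h1 := Measure.map_addHaar_smul (volume : Measure (Euc d)) hs
  have h2 : ∫⁻ ξ, F (a + s • ξ) = ∫⁻ y, F (a + y) ∂(Measure.map (s • ·) (volume : Measure (Euc d))) := by
    rw [lintegral_map (by fun_prop) (by fun_prop)]
  rw [h2, h1, lintegral_smul_measure, lintegral_add_left_eq_self, smul_eq_mul]

/-- The energy of the joint density of two consecutive states. -/
def en {d : ℕ} (f : Euc d → ℝ) (η : ℝ) (p : Euc d × Euc d) : ℝ :=
  f p.1 + ‖p.2 - p.1 + η • gradient f p.1‖^2 / (4 * η)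

namespace Pot
variable {d : ℕ} {f : Euc d → ℝ} {m L G : ℝ}

lemma en_cont (H : Pot f m L G) (η : ℝ) : Continuous (en f η) := by
  have hc : Continuous (fun p : Euc d × Euc d => η • gradient f p.1) :=
    (H.grad_cont.comp continuous_fst).const_smul η
  have hf : Continuous (fun p : Euc d × Euc d => f p.1) := H.f_cont.comp continuous_fst
  unfold en
  exact hf.add (((((continuous_snd.sub continuous_fst).add hc).norm).pow 2).div_const _)

lemma en_phi (H : Pot f m L G) {η : ℝ} (hη : 0 < η) (x ξ : Euc d) :
    en f η (x, phi f η (x, ξ)) = f x + ‖ξ‖^2/2 := by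
  simp only [en, phi]
  rw [show x - η • gradient f x + Real.sqrt (2*η) • ξ - x + η • gradient f x =
    Real.sqrt (2*η) • ξ by abel, norm_smul, mul_pow, Real.norm_eq_abs, sq_abs,
    Real.sq_sqrt (by positivity)]
  field_simp
  ring

lemma joint (H : Pot f m L G) {η : ℝ} (hη : 0 < η) {μ : Measure (Euc d)} (hμ : IsGibbs f μ) :
    ∃ C0 : ℝ≥0∞, (μ.prod (gam d)).map (fun p => (p.1, phi f η p)) =
      C0 • ((volume : Measure (Euc d)).prod (volume : Measure (Euc d))).withDensity
        (fun p => ENNReal.ofReal (Real.exp (-en f η p))) := by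
  obtain ⟨hp, c, hc0, hct, hμe⟩ := hμ
  set s := Real.sqrt (2*η) with hs
  have hs0 : s ≠ 0 := (Real.sqrt_pos.2 (by positivity)).ne'
  set K := ENNReal.ofReal |(s ^ Module.finrank ℝ (Euc d))⁻¹| with hK
  set cst : ℝ := ((2 * π) ^ ((d:ℝ)/2))⁻¹ with hcst
  have hcst0 : 0 ≤ cst := by positivity
  have mphi := H.phi_meas η
  have mpsi : Measurable (fun p : Euc d × Euc d => (p.1, phi f η p)) := measurable_fst.prodMk mphi
  have hD : Measurable (fun p : Euc d × Euc d => ENNReal.ofReal (Real.exp (-en f η p))) := by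
    have := (H.en_cont η).measurable
    fun_prop
  have hw : Measurable (fun x : Euc d => ENNReal.ofReal (Real.exp (-f x))) := by
    have := H.f_cont.measurable
    fun_prop
  have hgm : Measurable (fun x : Euc d => ENNReal.ofReal (gpdf d x)) := by
    have := (gpdf_cont d).measurable
    fun_prop
  refine ⟨c * (ENNReal.ofReal cst * K), Measure.ext_of_lintegral _ fun g hg => ?_⟩
  have hDg : Measurable (fun p : Euc d × Euc d => ENNReal.ofReal (Real.exp (-en f η p)) * g p) :=
    hD.mul hg
  have hgp : Measurable (fun p : Euc d × Euc d => g (p.1, phi f η p)) := hg.comp mpsi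
  rw [lintegral_map hg mpsi, lintegral_smul_measure,
    lintegral_withDensity_eq_lintegral_mul _ hD hg, lintegral_prod _ hgp.aemeasurable,
    lintegral_prod _ (hD.mul hg).aemeasurable]
  conv_lhs => rw [hμe]
  have hmi : Measurable (fun x => ∫⁻ ξ, g (x, phi f η (x, ξ)) ∂(gam d)) :=
    hgp.lintegral_prod_right'
  rw [lintegral_smul_measure]
  simp only [smul_eq_mul, Pi.mul_apply]
  rw [lintegral_withDensity_eq_lintegral_mul _ hw hmi]
  simp only [Pi.mul_apply]
  rw [mul_assoc]
  congr 1
  have hDgx : ∀ x, Measurable (fun y : Euc d =>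
      ENNReal.ofReal (Real.exp (-en f η (x, y))) * g (x, y)) := fun x => hDg.comp (by fun_prop)
  rw [← lintegral_const_mul _ hDg.lintegral_prod_right']
  refine lintegral_congr fun x => ?_
  have hgx : Measurable (fun ξ => g (x, phi f η (x, ξ))) :=
    hg.comp (mpsi.comp (by fun_prop : Measurable fun ξ : Euc d => (x, ξ)))
  rw [gam_density, lintegral_withDensity_eq_lintegral_mul _ hgm hgx,
    ← lintegral_const_mul _ (hgm.mul hgx)]
  simp only [Pi.mul_apply]
  have hDga : Measurable (fun ξ : Euc d =>
      ENNReal.ofReal (Real.exp (-en f η (x, x - η • gradient f x + s • ξ))) *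
        g (x, x - η • gradient f x + s • ξ)) :=
    (hDgx x).comp (by fun_prop : Measurable fun ξ : Euc d => x - η • gradient f x + s • ξ)
  rw [mul_assoc, ← lint_affine (x - η • gradient f x) hs0 (hDgx x),
    ← lintegral_const_mul _ hDga]
  refine lintegral_congr fun ξ => ?_
  have e := H.en_phi hη x ξ
  have e2 : x - η • gradient f x + s • ξ = phi f η (x, ξ) := rfl
  rw [e2, e, ← mul_assoc, ← mul_assoc, ← ENNReal.ofReal_mul (by positivity),
    ← ENNReal.ofReal_mul hcst0]
  congr 2
  rw [gpdf, ← hcst, mul_left_comm, ← Real.exp_add]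
  congr 2; ring

set_option maxHeartbeats 1000000 in
lemma mala (H : Pot f m L G) {η : ℝ} (hη : 0 < η) {μ : Measure (Euc d)} (hμ : IsGibbs f μ) :
    ∃ Γ : Measure (Euc d × Euc d), IsProbabilityMeasure Γ ∧ Γ.map Prod.fst = stp f η μ ∧
      Γ.map Prod.snd = μ ∧
      ∫⁻ p, ‖p.1 - p.2‖ₑ^2 ∂Γ ≤ ∫⁻ p, ENNReal.ofReal (
        min 1 |en f η (p.1, phi f η p) - en f η (phi f η p, p.1)| * ‖p.1 - phi f η p‖^2)
        ∂(μ.prod (gam d)) := by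
  obtain ⟨C0, hJ⟩ := H.joint hη hμ
  have hp : IsProbabilityMeasure μ := hμ.1
  have mphi := H.phi_meas η
  have men := (H.en_cont η).measurable
  have mens : Measurable (fun p : Euc d × Euc d => en f η p.swap) := men.comp measurable_swap
  have mpsi : Measurable (fun p : Euc d × Euc d => (p.1, phi f η p)) := measurable_fst.prodMk mphi
  set J := (μ.prod (gam d)).map (fun p => (p.1, phi f η p)) with hJdef
  have iJ : IsProbabilityMeasure J := Measure.isProbabilityMeasure_map mpsi.aemeasurable
  set θ : Euc d × Euc d → ℝ≥0∞ := fun p =>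
    ENNReal.ofReal (min 1 (Real.exp (en f η p - en f η p.swap))) with hθdef
  have hθ : Measurable θ := by
    have : Measurable (fun p : Euc d × Euc d => en f η p - en f η p.swap) := men.sub mens
    fun_prop
  have hD : Measurable (fun p : Euc d × Euc d => ENNReal.ofReal (Real.exp (-en f η p))) := by
    fun_prop
  have hsym : (J.withDensity θ).map Prod.swap = J.withDensity θ := by
    rw [hJ, withDensity_smul_measure, ← withDensity_mul _ hD hθ, Measure.map_smul,
      swap_withDensity (hD.mul hθ)]
    intro p
    simp only [Pi.mul_apply, hθdef, Prod.swap_swap]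
    rw [← ENNReal.ofReal_mul (by positivity), ← ENNReal.ofReal_mul (by positivity)]
    rw [mul_min_of_nonneg _ _ (Real.exp_pos _).le, mul_min_of_nonneg _ _ (Real.exp_pos _).le,
      ← Real.exp_add, ← Real.exp_add, mul_one, mul_one, min_comm]
    congr 3
    · ring
    · ring
  obtain ⟨Γ, g1, g2, g3, g4⟩ := mh_coupling J hθ (fun p => by
    rw [hθdef]; exact ENNReal.ofReal_le_one.2 (min_le_left _ _)) hsym
  refine ⟨Γ, g1, ?_, ?_, ?_⟩
  · rw [g2, hJdef, Measure.map_map measurable_snd mpsi]; rfl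
  · rw [g3, hJdef, Measure.map_map measurable_fst mpsi]
    have : (Prod.fst ∘ fun p : Euc d × Euc d => (p.1, phi f η p)) = Prod.fst := rfl
    rw [this]; simp
  · rw [g4, hJdef, lintegral_map (by fun_prop) mpsi]
    refine lintegral_mono fun p => ?_
    rw [ENNReal.ofReal_mul (by positivity), ENNReal.ofReal_pow (norm_nonneg _), ofReal_norm]
    refine mul_le_mul_left ?_ _
    simp only [hθdef, Prod.swap_prod_mk]
    rw [← ENNReal.ofReal_one, ← ENNReal.ofReal_sub _ (by positivity)]
    apply ENNReal.ofReal_le_ofReal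
    set t := en f η (p.1, phi f η p) - en f η (phi f η p, p.1)
    have h1 := Real.add_one_le_exp t
    have h2 := Real.exp_pos t
    refine le_min (by have : 0 ≤ min 1 (Real.exp t) := by positivity
                      linarith) ?_
    rcases le_total 1 (Real.exp t) with h | h
    · rw [min_eq_left h]; simp
    · rw [min_eq_right h]
      have := neg_abs_le t
      linarith

end Pot

namespace Pot
variable {d : ℕ} {f : Euc d → ℝ} {m L G : ℝ}

lemma en_diff (H : Pot f m L G) {η : ℝ} (hη : 0 < η) (x v : Euc d) :
    en f η (x, x + v) - en f η (x + v, x) =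
      -(f (x + v) - f x - (1/2) * inner ℝ (gradient f x + gradient f (x + v)) v)
      + η / 4 * (‖gradient f x‖^2 - ‖gradient f (x+v)‖^2) := by
  simp only [en]
  have e1 : x + v - x + η • gradient f x = v + η • gradient f x := by abel
  have e2 : x - (x + v) + η • gradient f (x+v) = η • gradient f (x+v) - v := by abel
  rw [e1, e2, norm_add_sq_real, norm_sub_sq_real, norm_smul, norm_smul, Real.norm_eq_abs, mul_pow,
    mul_pow, sq_abs, inner_smul_left, inner_smul_right, inner_add_left,
    real_inner_comm (gradient f x) v]
  simp only [conj_trivial]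
  field_simp
  ring

lemma trap_bd (H : Pot f m L G) (x v : Euc d) :
    |f (x + v) - f x - (1/2) * inner ℝ (gradient f x + gradient f (x + v)) v| ≤ 2 * L * ‖v‖^2 := by
  have h1 := H.taylor x v
  have h2 : |inner ℝ (gradient f (x+v) - gradient f x) v| ≤ L * ‖v‖ * ‖v‖ := by
    refine (abs_real_inner_le_norm _ _).trans ?_
    have := H.grad_lip (x+v) x
    rw [add_sub_cancel_left] at this
    gcongr
  have e : f (x + v) - f x - (1/2) * inner ℝ (gradient f x + gradient f (x + v)) v =
      (f (x + v) - f x - inner ℝ (gradient f x) v)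
        - (1/2) * inner ℝ (gradient f (x+v) - gradient f x) v := by
    rw [inner_add_left, inner_sub_left]; ring
  rw [e]
  rw [abs_le] at h1 h2 ⊢
  have := mul_nonneg H.hL.le (sq_nonneg ‖v‖)
  constructor <;> nlinarith

lemma trap_small (H : Pot f m L G) (x : Euc d) :
    (fun v => f (x + v) - f x - (1/2) * inner ℝ (gradient f x + gradient f (x + v)) v)
      =o[nhds 0] (fun v : Euc d => ‖v‖^2) := by
  have hd := hasFDerivAt_iff_isLittleO_nhds_zero.1 (H.grad_hasFDerivAt x)
  rw [Asymptotics.isLittleO_iff] at hd ⊢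
  intro c hc
  have h := hd (half_pos hc)
  rw [Metric.eventually_nhds_iff] at h ⊢
  obtain ⟨ρ, hρ, h⟩ := h
  refine ⟨ρ, hρ, fun v hv => ?_⟩
  have hv' : ‖v‖ < ρ := by simpa using hv
  have hderiv : ∀ t : ℝ, HasDerivAt (fun t : ℝ => f (x + t • v) - t * inner ℝ (gradient f x) v
      - t^2/2 * inner ℝ (Hs f x v) v)
      (inner ℝ (gradient f (x + t • v) - gradient f x - Hs f x (t • v)) v) t := by
    intro t
    have h1 : HasDerivAt (fun t : ℝ => x + t • v) v t := by
      simpa using ((hasDerivAt_id t).smul_const v).const_add x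
    have h2 := (H.diff (x + t • v)).hasFDerivAt.comp_hasDerivAt t h1
    have h3 : HasDerivAt (fun t : ℝ => t * inner ℝ (gradient f x) v) (inner ℝ (gradient f x) v) t := by
      simpa using (hasDerivAt_id t).mul_const (inner ℝ (gradient f x) v)
    have h4 : HasDerivAt (fun t : ℝ => t^2/2 * inner ℝ (Hs f x v) v)
        (t * inner ℝ (Hs f x v) v) t := by
      have := (((hasDerivAt_id t).pow 2).div_const 2).mul_const (inner ℝ (Hs f x v) v)
      refine this.congr_deriv ?_
      simp
    refine ((h2.sub h3).sub h4).congr_deriv ?_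
    rw [inner_sub_left, inner_sub_left, map_smul, inner_smul_left, H.inner_grad (x + t • v)]
    simp
  have hb := norm_image_sub_le_of_norm_deriv_le_segment_01' (C := c/2 * ‖v‖ * ‖v‖)
    (fun t _ => (hderiv t).hasDerivWithinAt) (fun t ht => by
      refine (norm_inner_le_norm _ _).trans ?_
      have htv : ‖t • v‖ ≤ ‖v‖ := by
        rw [norm_smul, Real.norm_eq_abs, abs_of_nonneg ht.1]
        exact mul_le_of_le_one_left (norm_nonneg _) ht.2.le
      have := h (y := t • v) (by simpa using htv.trans_lt hv')
      gcongr
      exact this.trans (by gcongr))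
  simp only [one_smul, zero_smul, add_zero, one_pow, one_mul, zero_mul, ne_eq, OfNat.ofNat_ne_zero,
    not_false_eq_true, zero_pow, zero_div, sub_zero, Real.norm_eq_abs] at hb
  have h5 : |inner ℝ (gradient f (x + v) - gradient f x - Hs f x v) v| ≤ c/2 * ‖v‖ * ‖v‖ := by
    refine (abs_real_inner_le_norm _ _).trans ?_
    gcongr
    exact h hv
  rw [inner_sub_left, inner_sub_left] at h5
  rw [Real.norm_eq_abs, Real.norm_eq_abs, abs_of_nonneg (sq_nonneg ‖v‖), inner_add_left]
  have := mul_nonneg hc.le (sq_nonneg ‖v‖)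
  rw [abs_le] at hb h5 ⊢
  constructor <;> nlinarith

/-- the increment of one LMC step -/
lemma incr_sq (H : Pot f m L G) {η : ℝ} (hη : 0 < η) (x ξ : Euc d) :
    ‖phi f η (x, ξ) - x‖^2 ≤ 2 * η^2 * L^2 * ‖x‖^2 + 4 * η * ‖ξ‖^2 := by
  have e : phi f η (x, ξ) - x = -(η • gradient f x) + Real.sqrt (2*η) • ξ := by
    simp only [phi]; abel
  rw [e]
  refine (norm_add_sq_le _ _).trans ?_
  rw [norm_neg, norm_smul, norm_smul, mul_pow, mul_pow, Real.norm_eq_abs, Real.norm_eq_abs, sq_abs,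
    sq_abs, Real.sq_sqrt (by positivity)]
  have := pow_le_pow_left₀ (norm_nonneg _) (H.grad_le x) 2
  rw [mul_pow] at this
  have h2 : η^2 * ‖gradient f x‖^2 ≤ η^2 * (L^2 * ‖x‖^2) := by gcongr
  linarith

/-- the log acceptance ratio -/
def rr (f : Euc d → ℝ) (η : ℝ) (p : Euc d × Euc d) : ℝ :=
  en f η (p.1, phi f η p) - en f η (phi f η p, p.1)

lemma rr_eq (H : Pot f m L G) {η : ℝ} (hη : 0 < η) (x ξ : Euc d) :
    rr f η (x, ξ) = en f η (x, x + (phi f η (x, ξ) - x)) - en f η (x + (phi f η (x, ξ) - x), x) := by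
  simp only [rr, add_sub_cancel]

lemma rr_bd (H : Pot f m L G) {η : ℝ} (hη : 0 < η) (hηL : η * L ≤ 1) (x ξ : Euc d) :
    |rr f η (x, ξ)| ≤ η * (6 * L^2 * ‖x‖^2 + 10 * L * ‖ξ‖^2) := by
  have hL := H.hL
  rw [H.rr_eq hη, H.en_diff hη]
  set v := phi f η (x, ξ) - x with hv
  have h1 := H.trap_bd x v
  have h2 := H.incr_sq hη x ξ
  rw [← hv] at h2
  have g1 := pow_le_pow_left₀ (norm_nonneg _) (H.grad_le x) 2
  have g2 := pow_le_pow_left₀ (norm_nonneg _) (H.grad_le (x+v)) 2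
  have h3 := norm_add_sq_le x v
  rw [mul_pow] at g1 g2
  set a := ‖gradient f x‖^2
  set b := ‖gradient f (x+v)‖^2
  have ha : 0 ≤ a := by positivity
  have hb : 0 ≤ b := by positivity
  have hX : 0 ≤ ‖x‖^2 := by positivity
  have hX2 : 0 ≤ ‖ξ‖^2 := by positivity
  have hV : 0 ≤ ‖v‖^2 := by positivity
  generalize ‖x‖^2 = X at *
  generalize ‖ξ‖^2 = Z at *
  generalize ‖v‖^2 = V at *
  have h4 : b ≤ L^2 * (2 * X + 2 * V) := g2.trans (by gcongr)
  have h5 : |η/4 * (a - b)| ≤ η / 4 * (L^2 * (3 * X + 2 * V)) := by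
    rw [abs_mul, abs_of_nonneg (by positivity : 0 ≤ η/4)]
    gcongr
    rw [abs_le]; constructor <;> nlinarith
  have h6 : η / 4 * (L^2 * (3 * X + 2 * V)) ≤ η * L^2 * X + L / 2 * V := by
    have : (η * L) * (L * V) ≤ 1 * (L * V) := by gcongr
    nlinarith [mul_nonneg (mul_nonneg hη.le (sq_nonneg L)) hX]
  have h7 : V ≤ η * (2 * L * X + 4 * Z) := by
    have : (η * L) * (η * L * X) ≤ 1 * (η * L * X) := by gcongr
    nlinarith
  have h8 : (5/2 * L) * V ≤ (5/2 * L) * (η * (2 * L * X + 4 * Z)) := by gcongr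
  refine (abs_add_le _ _).trans ?_
  rw [abs_neg]
  nlinarith

lemma rr_tendsto (H : Pot f m L G) {η : ℕ → ℝ} (hη : ∀ n, 0 < η n) (hηL : ∀ n, η n * L ≤ 1)
    (hη0 : Filter.Tendsto η Filter.atTop (nhds 0)) (x ξ : Euc d) :
    Filter.Tendsto (fun n => |rr f (η n) (x, ξ)| / η n) Filter.atTop (nhds 0) := by
  have hv : Filter.Tendsto (fun n => phi f (η n) (x, ξ) - x) Filter.atTop (nhds 0) := by
    have hc : Continuous (fun t : ℝ => phi f t (x, ξ) - x) := by
      simp only [phi]; fun_prop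
    have := (hc.tendsto 0).comp hη0
    simpa [phi, Function.comp_def] using this
  have h1 := (H.trap_small x).comp_tendsto hv
  have h2 : ((fun v : Euc d => ‖v‖^2) ∘ fun n => phi f (η n) (x, ξ) - x) =O[Filter.atTop] η := by
    refine Asymptotics.IsBigO.of_bound (2 * L * ‖x‖^2 + 4 * ‖ξ‖^2) (Filter.Eventually.of_forall fun n => ?_)
    simp only [Function.comp_apply]
    rw [Real.norm_eq_abs, Real.norm_eq_abs, abs_of_nonneg (sq_nonneg _), abs_of_nonneg (hη n).le]
    refine (H.incr_sq (hη n) x ξ).trans ?_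
    have hX : 0 ≤ ‖x‖^2 := by positivity
    have : (η n * L) * (η n * L * ‖x‖^2) ≤ 1 * (η n * L * ‖x‖^2) := by
      have := hηL n
      have := (hη n).le
      have := H.hL
      gcongr
    nlinarith
  have h3 := (h1.trans_isBigO h2).tendsto_div_nhds_zero
  have h4 : Filter.Tendsto (fun n => 1/4 * (‖gradient f x‖^2 -
      ‖gradient f (x + (phi f (η n) (x, ξ) - x))‖^2)) Filter.atTop (nhds 0) := by
    have hc : Continuous (fun v : Euc d => 1/4 * (‖gradient f x‖^2 - ‖gradient f (x + v)‖^2)) := by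
      have h5 : Continuous (fun v : Euc d => gradient f (x + v)) :=
        H.grad_cont.comp (by fun_prop)
      fun_prop
    have := (hc.tendsto 0).comp hv
    simpa [Function.comp_def] using this
  have h5 := (h3.neg.add h4).abs
  simp only [neg_zero, add_zero, abs_zero] at h5
  refine h5.congr fun n => ?_
  rw [H.rr_eq (hη n), H.en_diff (hη n)]
  have := hη n
  rw [← abs_of_pos this, ← abs_div, abs_of_pos this]
  congr 1
  simp only [Function.comp_apply]
  field_simp

lemma rr_meas (H : Pot f m L G) (η : ℝ) : Measurable (rr f η) := by
  have mphi := H.phi_meas η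
  have men := (H.en_cont η).measurable
  unfold rr
  exact (men.comp (measurable_fst.prodMk mphi)).sub (men.comp (mphi.prodMk measurable_fst))

set_option maxHeartbeats 1000000 in
lemma stat (H : Pot f m L G) {η : ℕ → ℝ} (hη : ∀ n, 0 < η n) (hηL : ∀ n, η n * L ≤ 1)
    (hη0 : Filter.Tendsto η Filter.atTop (nhds 0)) {μ : Measure (Euc d)} (hμ : IsGibbs f μ)
    (hμ2 : ∫⁻ x, ‖x‖ₑ^2 ∂μ < ⊤) {δ : ℝ} (hδ : 0 < δ) :
    ∀ᶠ n in Filter.atTop, Close (stp f (η n) μ) μ (δ * η n) := by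
  have hL := H.hL
  have hp : IsProbabilityMeasure μ := hμ.1
  set F : ℕ → Euc d × Euc d → ℝ≥0∞ := fun n p =>
    ENNReal.ofReal (min 1 |rr f (η n) p| * ‖p.1 - phi f (η n) p‖^2 / (η n)^2) with hF
  set bd : Euc d × Euc d → ℝ := fun p =>
    2 * L^2 * ‖p.1‖^2 + (24 * L^2 * (‖p.1‖^2 * ‖p.2‖^2) + 40 * L * ‖p.2‖^4) with hbd
  have hincr : ∀ n (x ξ : Euc d), ‖x - phi f (η n) (x, ξ)‖^2 / (η n)^2 ≤
      2 * L^2 * ‖x‖^2 + 4 * ‖ξ‖^2 / η n := by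
    intro n x ξ
    have h0 := hη n
    rw [norm_sub_rev, div_le_iff₀ (by positivity)]
    refine (H.incr_sq h0 x ξ).trans (le_of_eq ?_)
    field_simp
  have hI : Integrable bd (μ.prod (gam d)) := by
    have i1 : Integrable (fun x : Euc d => ‖x‖^2) μ := by
      refine ⟨by fun_prop, ?_⟩
      rw [hasFiniteIntegral_iff_enorm]
      refine lt_of_le_of_lt (le_of_eq ?_) hμ2
      refine lintegral_congr fun x => ?_
      simp
    have i2 := gam_int_sq d
    have i4 := gam_int_four d
    exact ((i1.comp_fst (gam d)).const_mul (2*L^2)).add (((i1.mul_prod i2).const_mul (24*L^2)).add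
      ((i4.comp_snd μ).const_mul (40*L)))
  have hlim : Filter.Tendsto (fun n => ∫⁻ p, F n p ∂(μ.prod (gam d))) Filter.atTop (nhds 0) := by
    have := tendsto_lintegral_of_dominated_convergence (μ := μ.prod (gam d)) (F := F)
      (f := fun _ => 0) (fun p => ENNReal.ofReal (bd p)) ?_ ?_ ?_ ?_
    · simpa using this
    · intro n
      have m1 := H.rr_meas (η n)
      have m2 := H.phi_meas (η n)
      have m3 : Measurable (fun p : Euc d × Euc d => ‖p.1 - phi f (η n) p‖^2) :=
        (measurable_fst.sub m2).norm.pow_const 2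
      simp only [hF]
      have m4 : Measurable (fun p : Euc d × Euc d => min 1 |rr f (η n) p|) :=
        measurable_const.min (continuous_abs.measurable.comp m1)
      exact ENNReal.measurable_ofReal.comp ((m4.mul m3).div_const _)
    · intro n
      refine Filter.Eventually.of_forall fun p => ENNReal.ofReal_le_ofReal ?_
      obtain ⟨x, ξ⟩ := p
      have h0 := hη n
      have h1 := hincr n x ξ
      have h2 := H.rr_bd h0 (hηL n) x ξ
      simp only [hbd]
      rw [mul_div_assoc]
      have h3 : min 1 |rr f (η n) (x, ξ)| ≤ 1 := min_le_left _ _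
      have h4 : min 1 |rr f (η n) (x, ξ)| ≤ η n * (6 * L^2 * ‖x‖^2 + 10 * L * ‖ξ‖^2) :=
        (min_le_right _ _).trans h2
      have h5 : 0 ≤ min 1 |rr f (η n) (x, ξ)| := by positivity
      set q := min 1 |rr f (η n) (x, ξ)|
      calc q * (‖x - phi f (η n) (x, ξ)‖^2 / (η n)^2)
          ≤ q * (2 * L^2 * ‖x‖^2 + 4 * ‖ξ‖^2 / η n) := by gcongr
        _ = q * (2 * L^2 * ‖x‖^2) + q * (4 * ‖ξ‖^2 / η n) := by ring
        _ ≤ 1 * (2 * L^2 * ‖x‖^2) +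
            (η n * (6 * L^2 * ‖x‖^2 + 10 * L * ‖ξ‖^2)) * (4 * ‖ξ‖^2 / η n) := by gcongr
        _ = _ := by field_simp; ring
    · exact hI.lintegral_lt_top.ne
    · refine Filter.Eventually.of_forall fun p => ?_
      obtain ⟨x, ξ⟩ := p
      have ht := (H.rr_tendsto hη hηL hη0 x ξ).const_mul (2 * L * ‖x‖^2 + 4 * ‖ξ‖^2)
      rw [mul_zero] at ht
      have hz : Filter.Tendsto (fun n => min 1 |rr f (η n) (x, ξ)| * ‖x - phi f (η n) (x, ξ)‖^2 / (η n)^2)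
          Filter.atTop (nhds 0) := by
        refine squeeze_zero (fun n => by positivity) (fun n => ?_) ht
        have h0 := hη n
        have h1 := hincr n x ξ
        have h4 : min 1 |rr f (η n) (x, ξ)| ≤ |rr f (η n) (x, ξ)| := min_le_right _ _
        have hX : 0 ≤ ‖x‖^2 := by positivity
        have h6 : 2 * L^2 * ‖x‖^2 ≤ 2 * L * ‖x‖^2 / η n := by
          rw [le_div_iff₀ h0]
          have : (η n * L) * (L * ‖x‖^2) ≤ 1 * (L * ‖x‖^2) := by
            have := hηL n
            gcongr
          nlinarith
        calc min 1 |rr f (η n) (x, ξ)| * ‖x - phi f (η n) (x, ξ)‖^2 / (η n)^2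
            = min 1 |rr f (η n) (x, ξ)| * (‖x - phi f (η n) (x, ξ)‖^2 / (η n)^2) := by ring
          _ ≤ |rr f (η n) (x, ξ)| * (2 * L * ‖x‖^2 / η n + 4 * ‖ξ‖^2 / η n) := by
              gcongr
              linarith
          _ = _ := by ring
      have := (ENNReal.continuous_ofReal.tendsto 0).comp hz
      simpa [hF, Function.comp_def] using this
  have hev := hlim.eventually (gt_mem_nhds (show (0:ℝ≥0∞) < ENNReal.ofReal (δ^2) by positivity))
  filter_upwards [hev] with n hn
  have h0 := hη n
  obtain ⟨Γ, g1, g2, g3, g4⟩ := H.mala h0 hμ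
  refine ⟨by positivity, Γ, g1, g2, g3, g4.trans ?_⟩
  have e : ∀ p : Euc d × Euc d, ENNReal.ofReal (
        min 1 |en f (η n) (p.1, phi f (η n) p) - en f (η n) (phi f (η n) p, p.1)|
          * ‖p.1 - phi f (η n) p‖^2) = ENNReal.ofReal ((η n)^2) * F n p := by
    intro p
    simp only [hF, rr]
    rw [← ENNReal.ofReal_mul (by positivity)]
    congr 1
    field_simp
  simp only [e]
  rw [lintegral_const_mul' _ _ ENNReal.ofReal_ne_top, mul_pow, mul_comm, ENNReal.ofReal_mul (by positivity)]
  gcongr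

end Pot

/-! ### Iterating -/

namespace Pot
variable {d : ℕ} {f : Euc d → ℝ} {m L G : ℝ}

lemma hL_of (H : Pot f m L G) {h : ℝ} (h0 : 0 < h) (hh : h * (4 * L^2) ≤ m) :
    2 * h * L ≤ 1 ∧ m * h ≤ 1 / 4 := by
  have hL := H.hL
  have hm := H.hm
  have h1 : 4 * h * L ≤ 1 := by
    have : (4 * h * L) * L ≤ 1 * L := by nlinarith [H.hmL]
    exact le_of_mul_le_mul_right this hL
  constructor
  · nlinarith [mul_pos h0 hL]
  · nlinarith [H.hmL]

lemma iter_prob (H : Pot f m L G) (h : ℝ) (ν : Measure (Euc d)) [IsProbabilityMeasure ν] (k : ℕ) :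
    IsProbabilityMeasure ((stp f h)^[k] ν) := by
  induction k with
  | zero => simpa using ‹IsProbabilityMeasure ν›
  | succ k ih =>
    rw [Function.iterate_succ_apply']
    exact H.stp_prob h _

lemma moment_one (H : Pot f m L G) {h : ℝ} (h0 : 0 < h) (hh : h * (4 * L^2) ≤ m)
    {ν : Measure (Euc d)} [IsProbabilityMeasure ν] {S : ℝ} (hS1 : 1 ≤ S) (hSd : 2 * d ≤ m * S^2)
    (hν : ∫⁻ x, ‖x‖ₑ^2 ∂ν ≤ ENNReal.ofReal (S^2)) :
    ∫⁻ x, ‖x‖ₑ^2 ∂(stp f h ν) ≤ ENNReal.ofReal (S^2) := by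
  obtain ⟨a1, a2⟩ := H.hL_of h0 hh
  have hL := H.hL
  refine (H.moment h0.le (by nlinarith [mul_pos h0 hL]) (by positivity) hν).trans ?_
  apply ENNReal.ofReal_le_ofReal
  have hm := H.hm
  have hmh : 0 < m * h := mul_pos hm h0
  have h1 : h * (2 * d) ≤ h * (m * S^2) := by gcongr
  have h2 : 0 ≤ (m * h) * S^2 * (1 - m * h) := by
    have : 0 ≤ 1 - m * h := by linarith
    positivity
  nlinarith

lemma moment_iter (H : Pot f m L G) {h : ℝ} (h0 : 0 < h) (hh : h * (4 * L^2) ≤ m)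
    {ν : Measure (Euc d)} [IsProbabilityMeasure ν] {S : ℝ} (hS1 : 1 ≤ S) (hSd : 2 * d ≤ m * S^2)
    (hν : ∫⁻ x, ‖x‖ₑ^2 ∂ν ≤ ENNReal.ofReal (S^2)) (k : ℕ) :
    ∫⁻ x, ‖x‖ₑ^2 ∂((stp f h)^[k] ν) ≤ ENNReal.ofReal (S^2) := by
  induction k with
  | zero => simpa using hν
  | succ k ih =>
    rw [Function.iterate_succ_apply']
    have := H.iter_prob h ν k
    exact H.moment_one h0 hh hS1 hSd ih

lemma half_num (H : Pot f m L G) {h : ℝ} (h0 : 0 < h) (hh : h * (4 * L^2) ≤ m)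
    {S : ℝ} (hS1 : 1 ≤ S) (hSd : 2 * d ≤ m * S^2) :
    Real.sqrt (((1 - m * (2 * h)) * (3 * (L^2 + G) * S / m * h)
        + h^2 * G * (1 + Real.sqrt (2*h) * Real.sqrt d)
        + h^2 * (G + L^2) * S)^2 + h^2*L^2*(h^2*L^2*S^2 + 2*h*d)) ≤ 3 * (L^2 + G) * S / m * h := by
  obtain ⟨a1, a2⟩ := H.hL_of h0 hh
  have hL := H.hL
  have hm := H.hm
  have hG := H.hG
  have hmL := H.hmL
  have hS : 0 < S := by linarith
  have hsq : Real.sqrt (2*h) * Real.sqrt d ≤ S / 2 := by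
    rw [← Real.sqrt_mul (by positivity)]
    apply Real.sqrt_le_iff.2 ⟨by positivity, ?_⟩
    have : (m * h) * S^2 ≤ 1/4 * S^2 := by gcongr
    nlinarith
  set Q := (L^2 + G) * S with hQ
  have hQ0 : 0 < Q := by positivity
  set α := 3 * (L^2 + G) * S / m with hα
  have hmα : m * α = 3 * Q := by rw [hα, hQ]; field_simp
  have hα0 : 0 < α := by positivity
  have hc1 : h^2 * G * (1 + Real.sqrt (2*h) * Real.sqrt d) + h^2 * (G + L^2) * S ≤ h^2 * (m * α) := by
    have : G * (1 + Real.sqrt (2*h) * Real.sqrt d) + (G + L^2) * S ≤ m * α := by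
      rw [hmα, hQ]
      have : G * (1 + Real.sqrt (2*h) * Real.sqrt d) ≤ G * (S + S/2) := by gcongr
      nlinarith [mul_pos (pow_pos hL 2) hS, mul_pos hG hS]
    have h2 := mul_le_mul_of_nonneg_left this (sq_nonneg h)
    linarith
  have hmh2 : 0 ≤ 1 - m * (2*h) := by linarith
  have hfirst : (1 - m * (2 * h)) * (α * h)
        + h^2 * G * (1 + Real.sqrt (2*h) * Real.sqrt d)
        + h^2 * (G + L^2) * S ≤ α * h * (1 - m * h) := by linarith
  have hsq2 := pow_le_pow_left₀ (by positivity) hfirst 2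
  have hc2 : L^2 * (h * L^2 * S^2 + 2 * d) ≤ m * α^2 := by
    have e1 : h * L^2 * S^2 ≤ m * S^2 := by
      have : h * L^2 ≤ m := by nlinarith [mul_pos h0 (pow_pos hL 2)]
      gcongr
    have e2 : L^2 * (h * L^2 * S^2 + 2 * d) ≤ L^2 * (2 * m * S^2) := by gcongr; linarith
    have e3 : m * (L^2 * (2 * m * S^2)) ≤ m * (m * α^2) := by
      have : m * (m * α^2) = 9 * Q^2 := by
        have : m * (m * α^2) = (m * α)^2 := by ring
        rw [this, hmα]; ring
      rw [this, hQ]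
      have h3 : (m * L) ≤ L^2 + G := by nlinarith
      have h4 : (m * L)^2 ≤ (L^2+G)^2 := by gcongr
      have h5 : (m * L)^2 * S^2 ≤ (L^2+G)^2 * S^2 := by gcongr
      nlinarith [mul_pos (pow_pos (mul_pos hm hL) 2) (pow_pos hS 2)]
    exact e2.trans (le_of_mul_le_mul_left e3 hm)
  have hc3 : h^3 * (L^2 * (h * L^2 * S^2 + 2 * d)) ≤ h^3 * (m * α^2) := by gcongr
  apply Real.sqrt_le_iff.2 ⟨by positivity, ?_⟩
  have h6 : 0 ≤ α^2 * h^2 * (m * h) * (1 - m * h) := by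
    have : 0 ≤ 1 - m * h := by linarith
    positivity
  nlinarith

lemma half_iter (H : Pot f m L G) {h : ℝ} (h0 : 0 < h) (hh : h * (4 * L^2) ≤ m)
    {ν : Measure (Euc d)} [IsProbabilityMeasure ν] {S : ℝ} (hS1 : 1 ≤ S) (hSd : 2 * d ≤ m * S^2)
    (hν : ∫⁻ x, ‖x‖ₑ^2 ∂ν ≤ ENNReal.ofReal (S^2)) (k : ℕ) :
    Close ((stp f (2*h))^[k] ν) ((stp f h)^[2*k] ν) (3 * (L^2 + G) * S / m * h) := by
  have hL := H.hL
  have hm := H.hm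
  have hG := H.hG
  induction k with
  | zero => exact (Close.refl ν).mono (by positivity)
  | succ k ih =>
    rw [show 2 * (k + 1) = 2 * k + 1 + 1 by ring, Function.iterate_succ_apply',
      Function.iterate_succ_apply', Function.iterate_succ_apply']
    exact (H.half_close h0.le (H.hL_of h0 hh).1 (by linarith)
      (H.moment_iter h0 hh hS1 hSd hν _) ih).mono (H.half_num h0 hh hS1 hSd)

lemma tele (H : Pot f m L G) {h : ℝ} (h0 : 0 < h) (hh : h * (4 * L^2) ≤ m)
    {ν : Measure (Euc d)} [IsProbabilityMeasure ν] {S : ℝ} (hS1 : 1 ≤ S) (hSd : 2 * d ≤ m * S^2)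
    (hν : ∫⁻ x, ‖x‖ₑ^2 ∂ν ≤ ENNReal.ofReal (S^2)) (k n : ℕ) :
    Close ((stp f h)^[k] ν) ((stp f (h / 2^n))^[k * 2^n] ν)
      (3 * (L^2 + G) * S / m * h * (1 - 1 / 2^n)) := by
  induction n with
  | zero =>
    have := H.iter_prob h ν k
    simpa using Close.refl ((stp f h)^[k] ν)
  | succ n ih =>
    have e : 2 * (h / 2^(n+1)) = h / 2^n := by rw [pow_succ]; field_simp
    have h1 : 0 < h / 2^(n+1) := by positivity
    have h2 : h / 2^(n+1) ≤ h := div_le_self h0.le (one_le_pow₀ (by norm_num))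
    have hh2 : h / 2^(n+1) * (4 * L^2) ≤ m := by
      refine le_trans ?_ hh
      gcongr
    have := H.half_iter h1 hh2 hS1 hSd hν (k * 2^n)
    rw [e] at this
    have t := ih.trans this
    rw [show 2 * (k * 2^n) = k * 2^(n+1) by ring] at t
    refine t.mono (le_of_eq ?_)
    rw [pow_succ]
    field_simp
    ring

lemma stat_iter (H : Pot f m L G) {η b : ℝ} (h0 : 0 < η) (hh : η * L ≤ 1) {μ : Measure (Euc d)}
    (hc : Close (stp f η μ) μ (b * η)) (K : ℕ) [IsProbabilityMeasure μ] (hb : 0 ≤ b) :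
    Close ((stp f η)^[K] μ) μ (b / m) := by
  have hm := H.hm
  induction K with
  | zero => exact (Close.refl μ).mono (by positivity)
  | succ K ih =>
    rw [Function.iterate_succ_apply']
    refine ((H.contr_close h0.le hh ih).trans hc).mono (le_of_eq ?_)
    field_simp
    ring

lemma contr_iter (H : Pot f m L G) {η a : ℝ} (h0 : 0 < η) (hh : η * L ≤ 1) {μ ν : Measure (Euc d)}
    (hc : Close ν μ a) (K : ℕ) :
    Close ((stp f η)^[K] ν) ((stp f η)^[K] μ) ((1 - m * η)^K * a) := by
  induction K with
  | zero => simpa using hc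
  | succ K ih =>
    rw [Function.iterate_succ_apply', Function.iterate_succ_apply']
    refine (H.contr_close h0.le hh ih).mono (le_of_eq ?_)
    ring

lemma main_bound (H : Pot f m L G) {h : ℝ} (h0 : 0 < h) (hh : h * (4 * L^2) ≤ m)
    {ν : Measure (Euc d)} [IsProbabilityMeasure ν] {S : ℝ} (hS1 : 1 ≤ S) (hSd : 2 * d ≤ m * S^2)
    (hν : ∫⁻ x, ‖x‖ₑ^2 ∂ν ≤ ENNReal.ofReal (S^2)) {μ : Measure (Euc d)} (hμ : IsGibbs f μ)
    (hμ2 : ∫⁻ x, ‖x‖ₑ^2 ∂μ < ⊤) (k : ℕ) :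
    W2 ((stp f h)^[k] ν) μ ≤ 3 * (L^2 + G) * S / m * h + Real.exp (-(m * h * k)) * W2 ν μ := by
  have hL := H.hL
  have hm := H.hm
  have hG := H.hG
  have hp : IsProbabilityMeasure μ := hμ.1
  apply le_of_forall_pos_le_add
  intro e he
  set δ := e / (1 + 1/m) with hδ
  have hδ0 : 0 < δ := by positivity
  have hδe : δ + δ / m = e := by rw [hδ]; field_simp
  set η : ℕ → ℝ := fun n => h / 2^n with hη
  have hηp : ∀ n, 0 < η n := fun n => by simp only [hη]; positivity
  have hηL : ∀ n, η n * L ≤ 1 := fun n => by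
    have h2 : h / 2^n ≤ h := div_le_self h0.le (one_le_pow₀ (by norm_num))
    have h3 := (H.hL_of h0 hh).1
    have : η n * L ≤ h * L := by simp only [hη]; gcongr
    nlinarith [mul_pos h0 hL]
  have hη0 : Filter.Tendsto η Filter.atTop (nhds 0) := by
    have := (tendsto_pow_atTop_nhds_zero_of_lt_one (r := (1/2:ℝ)) (by norm_num) (by norm_num)).const_mul h
    rw [mul_zero] at this
    refine this.congr fun n => ?_
    simp only [hη, one_div, inv_pow]
    rfl
  obtain ⟨n, hn⟩ := (H.stat hηp hηL hη0 hμ hμ2 hδ0).exists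
  have c1 := H.tele h0 hh hS1 hSd hν k n
  have c2 := close_W2 (hν.trans_lt ENNReal.ofReal_lt_top) hμ2 hδ0
  have c3 := H.contr_iter (hηp n) (hηL n) c2 (k * 2^n)
  have c4 := H.stat_iter (hηp n) (hηL n) hn (k * 2^n) hδ0.le
  have c5 := ((c1.trans (c3.trans c4)).W2_le)
  refine c5.trans ?_
  have hW : 0 ≤ W2 ν μ := Real.sqrt_nonneg _
  have h1 : (1 - m * η n)^(k * 2^n) ≤ Real.exp (-(m * h * k)) := by
    have hmη : 0 ≤ 1 - m * η n := by
      have : m * η n ≤ L * η n := by have := (hηp n).le; gcongr; exact H.hmL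
      nlinarith [hηL n]
    calc (1 - m * η n)^(k * 2^n) ≤ (Real.exp (-(m * η n)))^(k * 2^n) := by
          gcongr
          have := Real.add_one_le_exp (-(m * η n))
          linarith
      _ = Real.exp (-(m * h * k)) := by
          rw [← Real.exp_nat_mul]
          congr 1
          simp only [hη]
          push_cast
          field_simp
  have h2 : Real.exp (-(m * h * k)) ≤ 1 := by
    rw [Real.exp_le_one_iff]; have : 0 ≤ m * h * k := by positivity
    linarith
  have h3 : 3 * (L^2 + G) * S / m * h * (1 - 1 / 2^n) ≤ 3 * (L^2 + G) * S / m * h := by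
    apply mul_le_of_le_one_right (by positivity)
    have : (0:ℝ) ≤ 1 / 2^n := by positivity
    linarith
  have h4 : (1 - m * η n)^(k * 2^n) * (W2 ν μ + δ) ≤ Real.exp (-(m * h * k)) * (W2 ν μ + δ) := by
    gcongr
  have h5 : Real.exp (-(m * h * k)) * δ ≤ 1 * δ := by gcongr
  linarith

end Pot

/-! ### Law of the iterates -/

lemma law_iter {d : ℕ} {Ω : Type*} {mΩ : MeasurableSpace Ω} {P : Measure Ω} [IsProbabilityMeasure P]
    {f : Euc d → ℝ} {m L G : ℝ} (H : Pot f m L G) (h : ℝ)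
    {x0 : Ω → Euc d} (hx0 : AEStronglyMeasurable x0 P)
    {ξ : ℕ → Ω → Euc d} (hξmeas : ∀ k, Measurable (ξ k))
    (hξlaw : ∀ k, P.map (ξ k) = gam d)
    (hindep : iIndepFun (fun i : Option ℕ => i.elim x0 ξ) P)
    (Xb : ℕ → Ω → Euc d) (hX0 : Xb 0 = x0)
    (hXs : ∀ k : ℕ, Xb (k + 1) =
          fun ω => Xb k ω - h • gradient f (Xb k ω) + Real.sqrt (2 * h) • ξ (k + 1) ω) (k : ℕ) :
    P.map (Xb k) = (stp f h)^[k] (P.map x0) := by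
  set x1 := hx0.mk x0 with hx1
  have hx1m : Measurable x1 := hx0.stronglyMeasurable_mk.measurable
  have hx1e : x0 =ᵐ[P] x1 := hx0.ae_eq_mk
  set Y : Option ℕ → Ω → Euc d := fun i => i.elim x1 ξ with hY
  have hYm : ∀ i, Measurable (Y i) := by
    intro i; cases i with
    | none => exact hx1m
    | some j => exact hξmeas j
  have hYi : iIndepFun Y P := by
    refine hindep.congr fun i => ?_
    cases i with
    | none => exact hx1e
    | some j => exact Filter.EventuallyEq.rfl
  let X' : ℕ → Ω → Euc d := fun k => Nat.rec x1 (fun k X ω => phi f h (X ω, ξ (k+1) ω)) k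
  have hX's : ∀ k, X' (k+1) = fun ω => phi f h (X' k ω, ξ (k+1) ω) := fun k => rfl
  have hXe : ∀ k, Xb k =ᵐ[P] X' k := by
    intro k
    induction k with
    | zero => rw [hX0]; exact hx1e
    | succ k ih =>
      filter_upwards [ih] with ω hω
      rw [hXs, hX's]
      simp only [phi, hω]
  have mphi := H.phi_meas h
  set mi : Option ℕ → MeasurableSpace Ω := fun i => MeasurableSpace.comap (Y i) inferInstance with hmi
  set Sk : ℕ → Set (Option ℕ) := fun k => {i | ∀ j, i = some j → j ≤ k} with hSk
  have hmeas : ∀ k, Measurable[⨆ i ∈ Sk k, mi i] (X' k) := by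
    intro k
    induction k with
    | zero =>
      have h1 : mi none ≤ ⨆ i ∈ Sk 0, mi i :=
        le_iSup₂ (f := fun i (_ : i ∈ Sk 0) => mi i) none (by simp [hSk])
      have h2 : Measurable[mi none] (X' 0) := comap_measurable (Y none)
      exact h2.mono h1 le_rfl
    | succ k ih =>
      have h1 : (⨆ i ∈ Sk k, mi i) ≤ ⨆ i ∈ Sk (k+1), mi i := by
        apply biSup_mono
        intro i hi j hj
        exact (hi j hj).trans (Nat.le_succ k)
      have h2 : mi (some (k+1)) ≤ ⨆ i ∈ Sk (k+1), mi i :=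
        le_iSup₂ (f := fun i (_ : i ∈ Sk (k+1)) => mi i) (some (k+1)) (by
          intro j hj; simp at hj; omega)
      have h3 : Measurable[mi (some (k+1))] (ξ (k+1)) := comap_measurable (Y (some (k+1)))
      rw [hX's]
      exact mphi.comp ((ih.mono h1 le_rfl).prodMk (h3.mono h2 le_rfl))
  have hle : ∀ i, mi i ≤ mΩ := fun i => (hYm i).comap_le
  have hX'm : ∀ k, Measurable (X' k) := fun k => (hmeas k).mono (iSup₂_le fun i _ => hle i) le_rfl
  have hind : ∀ k, IndepFun (X' k) (ξ (k+1)) P := by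
    intro k
    have h1 := indep_iSup_of_disjoint hle hYi.iIndep (S := Sk k) (T := {some (k+1)}) (by
      rw [Set.disjoint_singleton_right]
      intro hc
      have := hc (k+1) rfl
      omega)
    rw [IndepFun_iff_Indep]
    refine indep_of_indep_of_le_left (indep_of_indep_of_le_right h1 ?_) (hmeas k).comap_le
    exact le_iSup₂ (f := fun i (_ : i ∈ ({some (k+1)} : Set (Option ℕ))) => mi i) (some (k+1)) rfl
  have hlaw : ∀ k, P.map (X' k) = (stp f h)^[k] (P.map x0) := by
    intro k
    induction k with
    | zero => exact (Measure.map_congr hx1e).symm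
    | succ k ih =>
      rw [Function.iterate_succ_apply', ← ih, hX's, stp, ← hξlaw (k+1),
        ← (indepFun_iff_map_prod_eq_prod_map_map (hX'm k).aemeasurable (hξmeas (k+1)).aemeasurable).1
          (hind k), Measure.map_map mphi ((hX'm k).prodMk (hξmeas (k+1)))]
      rfl
  rw [← hlaw k]
  exact Measure.map_congr (hXe k)

set_option maxHeartbeats 1000000

/-- **Upper bound of the mixing time of LMC** (Theorem 4).
Let `f ∈ C³` be `m`-strongly convex and `L`-smooth (`0 < m ≤ L`) with `∇f(0) = 0` and
`‖∇(Δf)(x)‖ ≤ G (1 + ‖x‖)` for some `G > 0`, let `μ ∝ exp (-f)` have finite second moment,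
and set `C_LMC = (10 (L² + G)/m^{3/2}) √(2d + m (E‖x₀‖² + 1))`.  For any accuracy
`0 < ε < 2 W₂(Law(x₀), μ)` there is a step size `0 < h ≤ 1/(4κL)` such that the LMC iterates
with step size `h` started from the square-integrable `x₀` reach `W₂(Law(x̄_k), μ) ≤ ε` for
some `k ≤ max {4κ², 2 C_LMC/(m ε)} · log (2 W₂(Law(x₀), μ)/ε)`. -/
theorem lmc_mixing_time_upper_bound
    {d : ℕ} {Ω : Type*} {mΩ : MeasurableSpace Ω} {P : Measure Ω} [IsProbabilityMeasure P]
    {f : Euc d → ℝ} {m L G : ℝ}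
    (hm : 0 < m) (hmL : m ≤ L) (hf : ContDiff ℝ 3 f) (hHess : HessianBounds m L f)
    (hgrad0 : gradient f 0 = 0) (hG : 0 < G)
    (hlapl : ∀ x : Euc d, ‖gradient (lapl f) x‖ ≤ G * (1 + ‖x‖))
    {μ : Measure (Euc d)} (hμ : IsGibbs f μ)
    (hμ2 : (∫⁻ x, (‖x‖₊ : ℝ≥0∞) ^ 2 ∂μ) < ⊤)
    {x0 : Ω → Euc d} (hx0 : MemLp x0 2 P)
    {ξ : ℕ → Ω → Euc d} (hξmeas : ∀ k, Measurable (ξ k))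
    (hξlaw : ∀ k, P.map (ξ k) = stdGaussian d)
    (hindep : iIndepFun (fun i : Option ℕ => i.elim x0 ξ) P)
    {ε : ℝ} (hε0 : 0 < ε) (hε1 : ε < 2 * W2 (P.map x0) μ) :
    ∃ h : ℝ, 0 < h ∧ h ≤ 1 / (4 * (L / m) * L) ∧
      ∀ Xb : ℕ → Ω → Euc d, Xb 0 = x0 →
        (∀ k : ℕ, Xb (k + 1) =
          fun ω => Xb k ω - h • gradient f (Xb k ω) + Real.sqrt (2 * h) • ξ (k + 1) ω) →
        ∃ k : ℕ,
          (k : ℝ) ≤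
            max (4 * (L / m) ^ 2)
                (2 * (10 * (L ^ 2 + G) / m ^ ((3:ℝ)/2) *
                  Real.sqrt (2 * d + m * ((∫ ω, ‖x0 ω‖ ^ 2 ∂P) + 1))) / (m * ε)) *
              Real.log (2 * W2 (P.map x0) μ / ε) ∧
          W2 (P.map (Xb k)) μ ≤ ε := by
  have H : Pot f m L G := ⟨hm, hmL, hf, hHess, hgrad0, hG, hlapl⟩
  have hL : 0 < L := lt_of_lt_of_le hm hmL
  have hx0m : AEMeasurable x0 P := hx0.1.aemeasurable
  have : IsProbabilityMeasure (P.map x0) := Measure.isProbabilityMeasure_map hx0m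
  have hE0 : 0 ≤ ∫ ω, ‖x0 ω‖ ^ 2 ∂P := integral_nonneg fun ω => by positivity
  have hν : ∫⁻ x, ‖x‖ₑ ^ 2 ∂(P.map x0) = ENNReal.ofReal (∫ ω, ‖x0 ω‖ ^ 2 ∂P) := by
    rw [lintegral_map' (by fun_prop) hx0m,
      ofReal_integral_eq_lintegral_ofReal (hx0.integrable_norm_pow (by norm_num))
        (Filter.Eventually.of_forall fun ω => by positivity)]
    refine lintegral_congr fun ω => ?_
    rw [ENNReal.ofReal_pow (norm_nonneg _), ofReal_norm]
  generalize (∫ ω, ‖x0 ω‖ ^ 2 ∂P) = E0 at hE0 hν ⊢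
  have hd : (0:ℝ) ≤ d := Nat.cast_nonneg d
  obtain ⟨S, hSdef⟩ : ∃ S, S = Real.sqrt (2 * d / m + E0 + 1) := ⟨_, rfl⟩
  have hdm : 0 ≤ 2 * (d:ℝ) / m := by positivity
  have hS2 : S ^ 2 = 2 * d / m + E0 + 1 := by
    rw [hSdef, Real.sq_sqrt (by positivity)]
  have hS1 : 1 ≤ S := by
    rw [hSdef]; exact Real.one_le_sqrt.2 (by linarith)
  have hmd : m * (2 * (d:ℝ) / m) = 2 * d := by field_simp
  have hSd : 2 * (d:ℝ) ≤ m * S ^ 2 := by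
    rw [hS2]; nlinarith
  have hC : 10 * (L ^ 2 + G) / m ^ ((3:ℝ)/2) * Real.sqrt (2 * d + m * (E0 + 1))
      = 10 * (L ^ 2 + G) * S / m := by
    have e1 : Real.sqrt (2 * d + m * (E0 + 1)) = Real.sqrt m * S := by
      rw [hSdef, ← Real.sqrt_mul hm.le]
      congr 1
      linear_combination -hmd
    have e2 : m ^ ((3:ℝ)/2) = m * Real.sqrt m := by
      rw [show (3:ℝ)/2 = 1 + 1/2 by norm_num, Real.rpow_add hm, Real.rpow_one,
        ← Real.sqrt_eq_rpow]
    have : Real.sqrt m ≠ 0 := (Real.sqrt_pos.2 hm).ne'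
    rw [e1, e2]
    field_simp
  rw [hC]
  obtain ⟨C, hCd⟩ : ∃ C, C = 10 * (L ^ 2 + G) * S / m := ⟨_, rfl⟩
  rw [← hCd]
  have hCpos : 0 < C := by rw [hCd]; positivity
  obtain ⟨M, hMd⟩ : ∃ M, M = max (4 * (L / m) ^ 2) (2 * C / (m * ε)) := ⟨_, rfl⟩
  rw [← hMd]
  have hM1 : 4 * (L / m) ^ 2 ≤ M := hMd ▸ le_max_left _ _
  have hM2 : 2 * C / (m * ε) ≤ M := hMd ▸ le_max_right _ _
  have hLm : 1 ≤ L / m := (one_le_div hm).2 hmL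
  have hM4 : 4 ≤ M := by nlinarith
  have hM0 : 0 < M := by linarith
  have hmM : 0 < m * M := by positivity
  have h0 : 0 < 1 / (m * M) := by positivity
  have hML : 4 * L ^ 2 ≤ M * m ^ 2 := by
    have : 4 * (L / m) ^ 2 * m ^ 2 = 4 * L ^ 2 := by field_simp
    rw [← this]; gcongr
  have hhb : 1 / (m * M) * (4 * L ^ 2) ≤ m := by
    rw [one_div, inv_mul_le_iff₀ hmM]; nlinarith
  refine ⟨1 / (m * M), h0, ?_, ?_⟩
  · apply one_div_le_one_div_of_le (by positivity)
    have : 4 * (L / m) * L = 4 * (L / m) ^ 2 * m := by field_simp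
    rw [this]; nlinarith
  intro Xb hX0 hXs
  obtain ⟨W, hWd⟩ : ∃ W, W = W2 (P.map x0) μ := ⟨_, rfl⟩
  rw [← hWd] at hε1 ⊢
  have hW0 : 0 < W := by linarith
  have hlog : 0 < Real.log (2 * W / ε) := Real.log_pos ((one_lt_div hε0).2 hε1)
  refine ⟨⌊M * Real.log (2 * W / ε)⌋₊, Nat.floor_le (by positivity), ?_⟩
  have hk : M * Real.log (2 * W / ε) < (⌊M * Real.log (2 * W / ε)⌋₊ : ℝ) + 1 :=
    Nat.lt_floor_add_one _
  generalize ⌊M * Real.log (2 * W / ε)⌋₊ = k at hk ⊢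
  rw [law_iter H (1 / (m * M)) hx0.1 hξmeas (fun k => (hξlaw k).trans (std_eq d)) hindep Xb hX0
    hXs k]
  refine (H.main_bound h0 hhb hS1 hSd
    (hν.le.trans (ENNReal.ofReal_le_ofReal (by rw [hS2]; linarith))) hμ hμ2 k).trans ?_
  rw [← hWd]
  have t1 : 3 * (L ^ 2 + G) * S / m * (1 / (m * M)) ≤ 3 / 20 * ε := by
    have : 3 * (L ^ 2 + G) * S / m = 3 / 10 * C := by rw [hCd]; ring
    rw [this, mul_one_div, div_le_iff₀ hmM]
    have := (div_le_iff₀ (by positivity)).1 hM2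
    nlinarith
  have t2 : Real.exp (-(m * (1 / (m * M)) * k)) ≤ 13 / 10 * (ε / (2 * W)) := by
    have e1 : m * (1 / (m * M)) * k = k / M := by field_simp
    have e2 : Real.log (2 * W / ε) - 1 / 4 ≤ k / M := by
      rw [le_div_iff₀ hM0]; nlinarith
    have e3 : Real.exp (1 / 4) ≤ 13 / 10 := by
      have h1 : Real.exp (1 / 4) ^ 4 = Real.exp 1 := by
        rw [← Real.exp_nat_mul]; norm_num
      have h2 := Real.exp_one_lt_d9
      by_contra hc
      push Not at hc
      have h3 : (13 / 10 : ℝ) ^ 4 < Real.exp (1 / 4) ^ 4 := by gcongr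
      rw [h1] at h3
      norm_num at h3 h2
      linarith
    calc Real.exp (-(m * (1 / (m * M)) * k))
        ≤ Real.exp (1 / 4 + -Real.log (2 * W / ε)) := by
          rw [e1]; apply Real.exp_le_exp.2; linarith
      _ = Real.exp (1 / 4) * (ε / (2 * W)) := by
          rw [Real.exp_add, Real.exp_neg, Real.exp_log (by positivity), inv_div]
      _ ≤ _ := by gcongr
  have t3 : Real.exp (-(m * (1 / (m * M)) * k)) * W ≤ 13 / 20 * ε := by
    calc _ ≤ 13 / 10 * (ε / (2 * W)) * W := by gcongr
      _ = _ := by field_simp; norm_num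
  linarith

end
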